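/- arXiv:1908.06202 — 2 statements merged into one kernel-verified Lean document; each statement's English description precedes it below -/
import Mathlib

section
/- Let X and Y be trees, p ∈ X and q ∈ Y. If C(p,X) is homeomorphic to C(q,Y), then ord(p,X) = ord(q,Y). -/
open Set Topology TopologicalSpace

universe u

/-- `IndDimLE m α t` means that the small inductive dimension of `α` is at most `m - 1`.
In particular `IndDimLE 0 α t` means `α` is empty (dimension `-1`). -/
def IndDimLE : ℕ → (α : Type u) → TopologicalSpace α → Prop
  | 0, α, _ => IsEmpty α
  | n + 1, α, t =>
      ∀ (x : α) (U : Set α), @IsOpen α t U → x ∈ U →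
        ∃ V : Set α, @IsOpen α t V ∧ x ∈ V ∧ V ⊆ U ∧
          IndDimLE n (↥(@frontier α t V))
            (TopologicalSpace.induced (Subtype.val : ↥(@frontier α t V) → α) t)

/-- The small inductive dimension of a topological space, as an integer
(with junk value if the dimension is infinite). -/
noncomputable def indDim (α : Type u) [t : TopologicalSpace α] : ℤ :=
  sInf {d : ℤ | ∃ m : ℕ, d = (m : ℤ) - 1 ∧ IndDimLE m α t}

section Defs

variable {X : Type u} [TopologicalSpace X]

/-- `A` is an arc, i.e. homeomorphic to `[0,1]`. -/
def IsArcSet (A : Set X) : Prop :=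
  Nonempty (↥A ≃ₜ ↥(Icc (0 : ℝ) 1))

/-- `A` is an arc with end points `a` and `b`. -/
def IsArcFromTo (A : Set X) (a b : X) : Prop :=
  ∃ h : ↥(Icc (0 : ℝ) 1) ≃ₜ ↥A,
    ((h ⟨0, by norm_num⟩ : ↥A) : X) = a ∧ ((h ⟨1, by norm_num⟩ : ↥A) : X) = b

/-- `a` is an end point of the arc `A`. -/
def IsArcEndpoint (A : Set X) (a : X) : Prop := ∃ b, IsArcFromTo A a b

/-- The points of the arc `A` which are not end points of `A`. -/
def arcInterior (A : Set X) : Set X := {x ∈ A | ¬ IsArcEndpoint A x}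

/-- `N` is a simple `n`-od with vertex `v`: the union of `n` arcs emanating from `v`
and otherwise disjoint from each other. -/
def IsSimpleNod (n : ℕ) (N : Set X) (v : X) : Prop :=
  0 < n ∧ ∃ A : Fin n → Set X, (∀ i, IsArcSet (A i)) ∧ (⋃ i, A i) = N ∧
    (∀ i, IsArcEndpoint (A i) v) ∧ ∀ i j, i ≠ j → A i ∩ A j = {v}

/-- `x` has order `n` in the subspace `S`: `x` has a closed neighborhood in `S`
which is a simple `n`-od having `x` as the vertex. -/
def HasOrdIn (S : Set X) (x : X) (n : ℕ) : Prop :=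
  ∃ N : Set X, N ⊆ S ∧ IsClosed N ∧ (∃ U : Set X, IsOpen U ∧ x ∈ U ∧ U ∩ S ⊆ N) ∧
    IsSimpleNod n N x

/-- The order of `x` in the subspace `S`. -/
noncomputable def ordIn (S : Set X) (x : X) : ℕ := sInf {n | HasOrdIn S x n}

/-- End points (order `1`) of the subspace `S`. -/
def endPtsIn (S : Set X) : Set X := {x ∈ S | HasOrdIn S x 1}

/-- Ordinary points (order `2`) of the subspace `S`. -/
def ordinaryIn (S : Set X) : Set X := {x ∈ S | HasOrdIn S x 2}

/-- Ramification points (order `≥ 3`) of the subspace `S`. -/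
def ramifIn (S : Set X) : Set X := {x ∈ S | ∃ n, 3 ≤ n ∧ HasOrdIn S x n}

/-- Vertices (points of order `≠ 2`) of the subspace `S`. -/
def verticesIn (S : Set X) : Set X := {x ∈ S | ¬ HasOrdIn S x 2}

/-- `e` is an edge of the subspace `S`: an arc joining two vertices of `S` and
containing no more than two vertices of `S`. -/
def IsEdgeIn (S : Set X) (e : Set X) : Prop :=
  e ⊆ S ∧ ∃ a b, a ∈ verticesIn S ∧ b ∈ verticesIn S ∧ IsArcFromTo e a b ∧
    e ∩ verticesIn S ⊆ {a, b}

/-- `S` is a simple closed curve. -/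
def IsSimpleClosedCurve (S : Set X) : Prop := Nonempty (↥S ≃ₜ Circle)

end Defs

/-- `X` is an arc (as a space). -/
def IsArcSpace (X : Type u) [TopologicalSpace X] : Prop :=
  Nonempty (X ≃ₜ ↥(Icc (0 : ℝ) 1))

/-- `X` is a finite graph: a continuum which is the union of finitely many arcs, any two
of which are either disjoint or intersect only in one or both of their end points. -/
def IsFiniteGraph (X : Type u) [MetricSpace X] : Prop :=
  CompactSpace X ∧ ConnectedSpace X ∧ Nonempty X ∧
    ∃ 𝒜 : Finset (Set X), (∀ A ∈ 𝒜, IsArcSet A) ∧ ⋃₀ (𝒜 : Set (Set X)) = univ ∧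
      ∀ A ∈ 𝒜, ∀ B ∈ 𝒜, A ≠ B → ∀ x ∈ A ∩ B, IsArcEndpoint A x ∧ IsArcEndpoint B x

/-- `X` is a tree: a finite graph without simple closed curves. -/
def IsTree (X : Type u) [MetricSpace X] : Prop :=
  IsFiniteGraph X ∧ ∀ S : Set X, ¬ IsSimpleClosedCurve S

/-- `X` is neither an arc nor a simple `n`-od. -/
def NotArcNotNod (X : Type u) [MetricSpace X] : Prop :=
  ¬ IsArcSpace X ∧ ∀ (n : ℕ) (v : X), ¬ IsSimpleNod n (univ : Set X) v

/-- `T(X)`: the union of all edges of `X` disjoint from the set of end points of `X`. -/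
def Tpart (X : Type u) [MetricSpace X] : Set X :=
  ⋃₀ {e : Set X | IsEdgeIn (univ : Set X) e ∧ e ∩ endPtsIn (univ : Set X) = ∅}

/-- `Sub_p(T(X))`: subtrees of `T(X)` containing `p` (subcontinua of `T(X)` all of whose
edges are edges of `X`). -/
def SubTreesP (X : Type u) [MetricSpace X] (p : X) : Set (Set X) :=
  {Y | Y ⊆ Tpart X ∧ p ∈ Y ∧ IsCompact Y ∧ IsConnected Y ∧
    ∀ e : Set X, IsEdgeIn Y e → IsEdgeIn (univ : Set X) e}

/-- Subtrees of the tree `X`. -/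
def Subtrees (X : Type u) [MetricSpace X] : Set (Set X) :=
  {Y | IsCompact Y ∧ IsConnected Y ∧
    ∀ e : Set X, IsEdgeIn Y e → IsEdgeIn (univ : Set X) e}

/-- The smallest subtree of `X` containing `a` and `b`. -/
def treeHull (X : Type u) [MetricSpace X] (a b : X) : Set X :=
  ⋂₀ {Y | Y ∈ Subtrees X ∧ a ∈ Y ∧ b ∈ Y}

/-- The hyperspace `C(p,X)` of subcontinua of `X` containing `p`,
with the Hausdorff metric. -/
def CP (X : Type u) [MetricSpace X] (p : X) : Type u :=
  {A : NonemptyCompacts X // IsConnected (A : Set X) ∧ p ∈ (A : Set X)}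

noncomputable instance (X : Type u) [MetricSpace X] (p : X) : MetricSpace (CP X p) :=
  inferInstanceAs (MetricSpace
    {A : NonemptyCompacts X // IsConnected (A : Set X) ∧ p ∈ (A : Set X)})

/-- The underlying subset of `X` of an element of `C(p,X)`. -/
def CP.set {X : Type u} [MetricSpace X] {p : X} (A : CP X p) : Set X := (A.1 : Set X)

/-- `U_n(X)`: elements of `C(p,X)` having a neighborhood in `C(p,X)` homeomorphic to
the `n`-cell `[0,1]^n`. -/
def Un (X : Type u) [MetricSpace X] (p : X) (n : ℕ) : Set (CP X p) :=
  {A | ∃ N : Set (CP X p), N ∈ 𝓝 A ∧ Nonempty (↥N ≃ₜ (Fin n → ↥(Icc (0 : ℝ) 1)))}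

/-- `𝒰(X) = ⋃ₙ U_n(X)`. -/
def UnionUn (X : Type u) [MetricSpace X] (p : X) : Set (CP X p) := ⋃ n : ℕ, Un X p n

/-- The edges of `X` which are not edges of `Y` and intersect `Y`. -/
def incidentE (X : Type u) [MetricSpace X] (Y : Set X) : Set (Set X) :=
  {e | IsEdgeIn (univ : Set X) e ∧ ¬ IsEdgeIn Y e ∧ (e ∩ Y).Nonempty}

/-- `U_Y`: elements of `C(p,X)` of the form `Y` together with exactly one interior point
of each edge of `X` incident on `Y`. -/
def UofY (X : Type u) [MetricSpace X] (p : X) (Y : Set X) : Set (CP X p) :=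
  {B | ∃ f : ↥(incidentE X Y) → X,
    (∀ e : ↥(incidentE X Y), f e ∈ arcInterior (e : Set X)) ∧ B.set = Y ∪ range f}

/-- `(X,p)` has unique hyperspace `C(p,X)` in the class of trees. -/
def UniqueHyperspaceInTrees (X : Type u) [MetricSpace X] (p : X) : Prop :=
  ∀ (Y : Type u) [MetricSpace Y], IsTree Y → ∀ q : Y,
    Nonempty (CP X p ≃ₜ CP Y q) → ∃ 𝔥 : X ≃ₜ Y, 𝔥 p = q

section PointedHyperspaces

open unitInterval

section NoRetraction

open MeasureTheory Metric Module

theorem Polynomial.exists_eval_one_eq_sum (d : ℕ) (a : ℝ) :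
    ∃ s w : Fin (d + 1) → ℝ, (∀ i, a < s i) ∧
      ∀ q : Polynomial ℝ, q.natDegree ≤ d → q.eval 1 = ∑ i, w i * q.eval (s i) := by
  have hinj : Function.Injective fun i : Fin (d + 1) => a + 1 + (i : ℝ) := fun i j h => by
    simpa [Fin.ext_iff] using h
  refine ⟨fun i => a + 1 + i, fun i => (Lagrange.basis Finset.univ
    (fun i : Fin (d + 1) => a + 1 + (i : ℝ)) i).eval 1, fun i => ?_, fun q hq => ?_⟩
  · have : (0 : ℝ) ≤ (i : ℕ) := Nat.cast_nonneg _
    linarith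
  · have hdeg : q.degree < (Finset.univ : Finset (Fin (d + 1))).card := by
      rw [Finset.card_univ, Fintype.card_fin]
      exact (Polynomial.degree_le_of_natDegree_le hq).trans_lt
        (by exact_mod_cast Nat.lt_succ_self d)
    have := congrArg (Polynomial.eval 1) (Lagrange.eq_interpolate hinj.injOn hdeg)
    rw [this, Lagrange.interpolate_apply, Polynomial.eval_finsetSum]
    refine Finset.sum_congr rfl fun i _ => ?_
    rw [Polynomial.eval_mul, Polynomial.eval_C, mul_comm]

theorem ContinuousLinearMap.det_one_add_pos {E : Type*} [NormedAddCommGroup E] [NormedSpace ℝ E]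
    [FiniteDimensional ℝ E] (A : E →L[ℝ] E) (hA : ‖A‖ < 1) : 0 < (1 + A).det := by
  have : CompleteSpace E := FiniteDimensional.complete ℝ E
  by_contra! h
  have hc : ContinuousOn (fun t : ℝ => (1 + t • A).det) (Icc 0 1) :=
    (ContinuousLinearMap.continuous_det.comp (by fun_prop)).continuousOn
  have h0 : (1 + (0 : ℝ) • A).det = 1 := by simp [ContinuousLinearMap.det]
  obtain ⟨t, ht, h⟩ := intermediate_value_Icc' zero_le_one hc
    (show (0 : ℝ) ∈ _ from ⟨by simpa using h, by simp [ContinuousLinearMap.det]⟩)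
  have hu : IsUnit (1 + t • A) := by
    have := isUnit_one_sub_of_norm_lt_one (x := -(t • A)) (by
      rw [norm_neg, norm_smul, Real.norm_of_nonneg ht.1]
      nlinarith [norm_nonneg A, ht.2])
    simpa using this
  have hl : IsUnit ((1 + t • A : E →L[ℝ] E) : E →ₗ[ℝ] E) :=
    hu.map (ContinuousLinearMap.toLinearMapRingHom (R₁ := ℝ) (M₁ := E))
  exact (LinearMap.isUnit_iff_isUnit_det _).1 hl |>.ne_zero h

variable {E : Type*} [NormedAddCommGroup E]

theorem lipschitzWith_indicator_closedBall [NormedSpace ℝ E] {R : ℝ} {K : NNReal} {g : E → E}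
    (hg : LipschitzOnWith K g (closedBall 0 R)) (h0 : ∀ x, ‖x‖ = R → g x = 0) :
    LipschitzWith K ((closedBall (0 : E) R).indicator g) := by
  have key : ∀ x y : E, ‖x‖ ≤ R → R < ‖y‖ → dist (g x) 0 ≤ K * dist x y := by
    intro x y hx hy
    obtain ⟨z, hz, hzR⟩ := (convex_segment x y).isPreconnected.intermediate_value
      (left_mem_segment ℝ x y) (right_mem_segment ℝ x y) continuous_norm.continuousOn ⟨hx, hy.le⟩
    rw [← h0 z hzR]
    refine (hg.dist_le_mul x (by simpa using hx) z (by simp [hzR])).trans ?_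
    have := dist_add_dist_of_mem_segment hz
    gcongr
    linarith [dist_nonneg (x := z) (y := y)]
  refine LipschitzWith.of_dist_le_mul fun x y => ?_
  by_cases hx : x ∈ closedBall (0 : E) R <;> by_cases hy : y ∈ closedBall (0 : E) R
  · rw [indicator_of_mem hx, indicator_of_mem hy]
    exact hg.dist_le_mul x hx y hy
  · rw [indicator_of_mem hx, indicator_of_notMem hy]
    exact key x y (by simpa using hx) (by simpa using hy)
  · rw [indicator_of_notMem hx, indicator_of_mem hy, dist_comm, dist_comm x]
    exact key y x (by simpa using hy) (by simpa using hx)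
  · rw [indicator_of_notMem hx, indicator_of_notMem hy, dist_self]
    positivity

theorem bijOn_closedBall_add_smul_sub [NormedSpace ℝ E] [CompleteSpace E] {R t : ℝ} {K : NNReal}
    {r : E → E} (hg : LipschitzOnWith K (fun x => r x - x) (closedBall 0 R))
    (hr : ∀ x, ‖r x‖ = R) (h0 : ∀ x, ‖x‖ = R → r x = x)
    (ht0 : 0 ≤ t) (ht1 : t ≤ 1) (htK : t * K < 1) :
    BijOn (fun x => x + t • (r x - x)) (closedBall 0 R) (closedBall 0 R) := by
  set G := (closedBall (0 : E) R).indicator (fun x => r x - x) with hG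
  have hGL : LipschitzWith K G :=
    lipschitzWith_indicator_closedBall hg fun x hx => by simp [h0 x hx]
  refine ⟨fun x hx => ?_, fun x hx y hy hxy => ?_, fun y hy => ?_⟩
  · have h1 : x + t • (r x - x) = (1 - t) • x + t • r x := by module
    have h2 : r x ∈ closedBall (0 : E) R := by simp [hr x]
    change x + t • (r x - x) ∈ _
    rw [h1]
    exact convex_closedBall (0 : E) R hx h2 (by linarith) ht0 (by ring)
  · have h1 := hg.dist_le_mul x hx y hy
    have h2 : x - y = t • ((r y - y) - (r x - x)) := by
      have : x + t • (r x - x) = y + t • (r y - y) := hxy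
      rw [smul_sub t (r y - y), sub_eq_sub_iff_add_eq_add, this, add_comm]
    have h3 : dist x y = t * dist (r x - x) (r y - y) := by
      rw [dist_eq_norm, h2, norm_smul, Real.norm_of_nonneg ht0, dist_comm, dist_eq_norm]
    have h4 : dist x y ≤ t * K * dist x y := by
      nlinarith
    have h5 : dist x y ≤ 0 := by nlinarith [dist_nonneg (x := x) (y := y)]
    exact dist_le_zero.1 h5
  · have hc : ContractingWith (t.toNNReal * K) fun x => y - t • G x := by
      refine ⟨by rw [← NNReal.coe_lt_coe]; simpa [ht0] using htK,
      LipschitzWith.of_dist_le_mul fun a b => ?_⟩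
      have := hGL.dist_le_mul a b
      rw [dist_sub_left, dist_smul₀, Real.norm_of_nonneg ht0, NNReal.coe_mul,
      Real.coe_toNNReal t ht0,
        mul_assoc]
      exact mul_le_mul_of_nonneg_left this ht0
    have hfix := hc.fixedPoint_isFixedPt
    set x := ContractingWith.fixedPoint _ hc
    have hx : y - t • G x = x := hfix
    have hxB : x ∈ closedBall (0 : E) R := by
      by_contra hxB
      rw [hG, indicator_of_notMem hxB, smul_zero, sub_zero] at hx
      exact hxB (hx ▸ hy)
    refine ⟨x, hxB, ?_⟩
    rw [hG, indicator_of_mem hxB] at hx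
    change x + t • (r x - x) = y
    nth_rewrite 1 [← hx]
    abel

variable [InnerProductSpace ℝ E] [FiniteDimensional ℝ E]

theorem ContDiff.not_retraction_sphere {R : ℝ} (hR : 0 < R) {r : E → E} (hc : ContDiff ℝ 1 r)
    (hr : ∀ x, ‖r x‖ = R) (h0 : ∀ x, ‖x‖ = R → r x = x) : False := by
  borelize E
  have : CompleteSpace E := FiniteDimensional.complete ℝ E
  let μ : Measure E := Measure.addHaar
  set B := closedBall (0 : E) R
  have hB : IsCompact B := isCompact_closedBall 0 R
  set A : E → E →L[ℝ] E := fun x => fderiv ℝ r x - 1 with hAdef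
  have hAc : Continuous A := (hc.continuous_fderiv one_ne_zero).sub continuous_const
  have hdiff : ∀ x, HasFDerivAt (fun x => r x - x) (A x) x := fun x =>
    ((hc.differentiable one_ne_zero) x).hasFDerivAt.sub (hasFDerivAt_id x)
  obtain ⟨C, hC⟩ := hB.exists_bound_of_continuousOn hAc.continuousOn
  set K : NNReal := C.toNNReal
  have hAK : ∀ x ∈ B, ‖A x‖ ≤ K := fun x hx => (hC x hx).trans (Real.le_coe_toNNReal C)
  have hgL : LipschitzOnWith K (fun x => r x - x) B :=
    (convex_closedBall 0 R).lipschitzOnWith_of_nnnorm_hasFDerivWithin_le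
      (fun x hx => (hdiff x).hasFDerivWithinAt) fun x hx => hAK x hx
  set d := finrank ℝ E
  have hdet : ∀ (s : ℝ) x, ((-(A x) : E →L[ℝ] E) : E →ₗ[ℝ] E).charpoly.eval s
      = (s • (1 : E →L[ℝ] E) + A x).det := by
    intro s x
    rw [LinearMap.eval_charpoly, ContinuousLinearMap.det]
    congr 1
    ext v
    simp [Algebra.algebraMap_eq_smul_one]
  have hvol : ∀ s : ℝ, max 1 (K : ℝ) < s →
      ∫ x in B, (s • (1 : E →L[ℝ] E) + A x).det ∂μ = s ^ d * μ.real B := by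
    intro s hs
    have hs1 : 1 < s := (le_max_left _ _).trans_lt hs
    have hsK : (K : ℝ) < s := (le_max_right _ _).trans_lt hs
    have hs0 : 0 < s := by linarith
    have hbij := bijOn_closedBall_add_smul_sub (t := s⁻¹) hgL hr h0 (by positivity)
      (inv_le_one_of_one_le₀ hs1.le) (by rw [inv_mul_lt_iff₀ hs0]; simpa using hsK)
    have hint := integral_image_eq_integral_abs_det_fderiv_smul μ measurableSet_closedBall
      (f' := fun x => 1 + s⁻¹ • A x)
      (fun x hx => ((hasFDerivAt_id x).add ((hdiff x).const_smul s⁻¹)).hasFDerivWithinAt)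
      hbij.injOn (fun _ => (1 : ℝ))
    have himg : ((id + s⁻¹ • fun x => r x - x) '' closedBall (0 : E) R) = B := hbij.image_eq
    rw [himg] at hint
    have hpt : ∀ x ∈ B, (s • (1 : E →L[ℝ] E) + A x).det
        = s ^ d * (|(1 + s⁻¹ • A x).det| • (1 : ℝ)) := by
      intro x hx
      have hpos : 0 < (1 + s⁻¹ • A x).det := by
        refine ContinuousLinearMap.det_one_add_pos _ ?_
        rw [norm_smul, norm_inv, Real.norm_of_nonneg hs0.le, inv_mul_lt_iff₀ hs0, mul_one]
        exact (hAK x hx).trans_lt hsK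
      rw [abs_of_pos hpos, smul_eq_mul, mul_one, ContinuousLinearMap.det,
        ContinuousLinearMap.det, ← LinearMap.det_smul]
      congr 1
      ext v
      simp [smul_smul, hs0.ne']
    rw [setIntegral_congr_fun measurableSet_closedBall hpt, integral_const_mul, ← hint]
    simp
  obtain ⟨s, w, hs, hsw⟩ := Polynomial.exists_eval_one_eq_sum d (max 1 (K : ℝ))
  have hzero : ∀ x, ((1 : ℝ) • (1 : E →L[ℝ] E) + A x).det = 0 := by
    intro x
    have h1 : (1 : ℝ) • (1 : E →L[ℝ] E) + A x = fderiv ℝ r x := by simp [hAdef]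
    rw [h1]
    by_contra hne
    have hu : IsUnit ((fderiv ℝ r x : E →L[ℝ] E) : E →ₗ[ℝ] E) :=
      (LinearMap.isUnit_iff_isUnit_det _).2 (isUnit_iff_ne_zero.2 hne)
    obtain ⟨v, hv⟩ := ((Module.End.isUnit_iff _).1 hu).2 (r x)
    have hd := ((hc.differentiable one_ne_zero) x).hasFDerivAt
    have h2 := hd.norm_sq
    have h3 : HasFDerivAt (fun y => ‖r y‖ ^ 2) (0 : E →L[ℝ] ℝ) x := by
      simp only [hr]
      exact hasFDerivAt_const _ _
    have h4 := congrArg (fun L : E →L[ℝ] ℝ => L v) (h2.unique h3)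
    have hv' : fderiv ℝ r x v = r x := hv
    simp [hv', hr] at h4
    exact hR.ne' h4
  have hexp : ∀ x, (0 : ℝ) = ∑ i, w i * (s i • (1 : E →L[ℝ] E) + A x).det := by
    intro x
    have := hsw _ (LinearMap.charpoly_natDegree ((-(A x) : E →L[ℝ] E) : E →ₗ[ℝ] E)).le
    simp only [hdet] at this
    rw [← this, hzero]
  have hintg : ∀ i, IntegrableOn (fun x => (s i • (1 : E →L[ℝ] E) + A x).det) B μ := fun i =>
    ((ContinuousLinearMap.continuous_det.comp
      (continuous_const.add hAc)).continuousOn).integrableOn_compact hB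
  have hsum : (0 : ℝ) = ∑ i, w i * (s i ^ d * μ.real B) := by
    have : ∫ x in B, (∑ i, w i * (s i • (1 : E →L[ℝ] E) + A x).det) ∂μ = 0 := by
      simp [← hexp]
    rw [integral_finsetSum _ fun i _ => (hintg i).const_mul (w i)] at this
    rw [← this]
    refine Finset.sum_congr rfl fun i _ => ?_
    rw [integral_const_mul, hvol _ (hs i)]
  have hone := hsw (Polynomial.X ^ d) (by simp)
  simp only [Polynomial.eval_pow, Polynomial.eval_X, one_pow] at hone
  have hvB : 0 < μ.real B := by
    refine ENNReal.toReal_pos (measure_closedBall_pos μ _ hR).ne' hB.measure_lt_top.ne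
  simp only [← mul_assoc, ← Finset.sum_mul, ← hone] at hsum
  linarith

theorem Continuous.exists_eq_zero_of_eq_id_outside {R : ℝ} {F : E → E} (hF : Continuous F)
    (hid : ∀ x, R ≤ ‖x‖ → F x = x) : ∃ x, F x = 0 := by
  by_contra! hne
  wlog hR : 0 < R generalizing R
  · exact this (R := 1) (fun x hx => hid x (by linarith)) zero_lt_one
  have hB : IsCompact (closedBall (0 : E) R) := isCompact_closedBall 0 R
  obtain ⟨ε, hε, hFε⟩ : ∃ ε > 0, ∀ x, ε ≤ ‖F x‖ := by
    obtain ⟨x₀, hx₀, hmin⟩ := hB.exists_isMinOn ⟨0, by simp [hR.le]⟩ hF.norm.continuousOn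
    refine ⟨min ‖F x₀‖ R, lt_min (norm_pos_iff.2 (hne x₀)) hR, fun x => ?_⟩
    rcases le_total ‖x‖ R with h | h
    · exact (min_le_left _ _).trans (hmin (by simpa using h))
    · rw [hid x h]
      exact (min_le_right _ _).trans h
  have hG : Continuous fun x => F x - x := hF.sub continuous_id
  have hsupp : HasCompactSupport fun x => F x - x := by
    refine HasCompactSupport.intro hB fun x hx => ?_
    rw [hid x (by simpa using le_of_not_ge (by simpa using hx)), sub_self]
  have hu := hsupp.uniformContinuous_of_continuous hG
  obtain ⟨δ, hδ, hGδ⟩ := Metric.uniformContinuous_iff.1 hu (ε / 2) (half_pos hε)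
  obtain ⟨g, hgs, hg⟩ := hG.exists_contDiff_dist_le_of_forall_mem_ball_dist_le
    (lt_min hδ zero_lt_one)
  have hgF : ∀ x, x + g x ≠ 0 := by
    intro x hx
    have h1 : dist (g x) (F x - x) ≤ ε / 2 := hg x _ fun y hy =>
      (hGδ ((mem_ball.1 hy).trans_le (min_le_left _ _))).le
    have h2 : g x = -x := eq_neg_of_add_eq_zero_right hx
    rw [h2, dist_eq_norm, neg_sub_left, norm_neg, sub_add_cancel] at h1
    linarith [hFε x]
  have hg0 : ∀ x, ‖x‖ = R + 1 → g x = 0 := by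
    intro x hx
    have h1 : dist (g x) (F x - x) ≤ 0 := by
      refine hg x _ fun y hy => ?_
      have h2 : dist y x < 1 := (mem_ball.1 hy).trans_le (min_le_right _ _)
      have h3 : R ≤ ‖y‖ := by
        have := norm_sub_norm_le x y
        rw [dist_comm, dist_eq_norm] at h2
        linarith
      rw [hid y h3, hid x (by linarith)]
      simp
    rw [hid x (by linarith), sub_self] at h1
    exact dist_le_zero.1 h1
  have hc : ContDiff ℝ 1 fun x => x + g x := contDiff_id.add (hgs.of_le (by exact_mod_cast le_top))
  have hc2 : ContDiff ℝ 1 fun x => ((R + 1) / ‖x + g x‖) • (x + g x) :=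
    (contDiff_const.div (hc.norm ℝ hgF) fun x => norm_ne_zero_iff.2 (hgF x)).smul hc
  refine hc2.not_retraction_sphere (R := R + 1) (by linarith) (fun x => ?_) fun x hx => ?_
  · rw [norm_smul, norm_div, norm_norm, div_mul_cancel₀ _ (norm_ne_zero_iff.2 (hgF x)),
      Real.norm_of_nonneg (by linarith)]
  · rw [hg0 x hx, add_zero, hx, div_self (by linarith), one_smul]

end NoRetraction

/-- The Poincaré–Miranda theorem. -/
theorem Continuous.exists_eq_zero_of_neg_of_pos {m : ℕ} {f : (Fin m → I) → Fin m → ℝ}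
    (hf : Continuous f) (hneg : ∀ x i, x i = 0 → f x i < 0) (hpos : ∀ x i, x i = 1 → 0 < f x i) :
    ∃ x, f x = 0 := by
  by_contra! hne
  let c : (Fin m → ℝ) → Fin m → I := fun y i => projIcc 0 1 zero_le_one (y i + 1 / 2)
  have hc : Continuous c := by fun_prop
  let l : (Fin m → ℝ) → ℝ := fun y => min 1 (max 0 (‖y‖ - 1))
  have hl : Continuous l := by fun_prop
  have hl0 : ∀ y, 0 ≤ l y := fun y => le_min zero_le_one (le_max_left _ _)
  have hl1 : ∀ y, l y ≤ 1 := fun y => min_le_left _ _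
  let F : (Fin m → ℝ) → Fin m → ℝ := fun y i =>
    (1 - l y) * (f (c y) i + (y i + 1 / 2 - c y i)) + l y * y i
  have hF : Continuous F := by fun_prop
  have hFne : ∀ y, F y ≠ 0 := by
    intro y hy
    by_cases hcube : ∀ i, |y i| ≤ 1 / 2
    · have hly : l y = 0 := by
        have : ‖y‖ ≤ 1 / 2 := (pi_norm_le_iff_of_nonneg (by norm_num)).2 hcube
        simp only [l]
        rw [max_eq_left (by linarith), min_eq_right zero_le_one]
      refine hne (c y) (funext fun i => ?_)
      have h1 : (c y i : ℝ) = y i + 1 / 2 := by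
        have := abs_le.1 (hcube i)
        simp only [c]
        rw [projIcc_of_mem _ (show y i + 1 / 2 ∈ Icc (0 : ℝ) 1 by
          constructor <;> linarith)]
      have h2 := congrFun hy i
      simpa [F, hly, h1] using h2
    · push Not at hcube
      obtain ⟨i, hi⟩ := hcube
      have h2 : (1 - l y) * (f (c y) i + (y i + 1 / 2 - c y i)) + l y * y i = 0 := congrFun hy i
      rcases lt_abs.1 hi with hi | hi
      · have h1 : c y i = 1 := projIcc_of_right_le _ (by linarith)
        have h3 := hpos _ _ h1
        rw [h1, Set.Icc.coe_one] at h2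
        nlinarith [hl0 y, hl1 y]
      · have h1 : c y i = 0 := projIcc_of_le_left _ (by linarith)
        have h3 := hneg _ _ h1
        rw [h1, Set.Icc.coe_zero] at h2
        nlinarith [hl0 y, hl1 y]
  have hbdd : Bornology.IsBounded
      ((WithLp.toLp 2 : (Fin m → ℝ) → EuclideanSpace ℝ (Fin m)) '' Metric.closedBall 0 2) :=
    ((isCompact_closedBall _ _).image (PiLp.continuous_toLp 2 _)).isBounded
  obtain ⟨R, hR⟩ := hbdd.subset_closedBall 0
  obtain ⟨x, hx⟩ := Continuous.exists_eq_zero_of_eq_id_outside (R := R + 1)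
    (F := fun y : EuclideanSpace ℝ (Fin m) => WithLp.toLp 2 (F y.ofLp))
    ((PiLp.continuous_toLp 2 _).comp (hF.comp (PiLp.continuous_ofLp 2 _))) fun y hy => by
      have h2 : 2 ≤ ‖y.ofLp‖ := by
        by_contra! h
        have := hR ⟨y.ofLp, by simpa using h.le, rfl⟩
        rw [mem_closedBall_zero_iff] at this
        have h3 : ‖y‖ ≤ R := this
        linarith
      have h3 : l y.ofLp = 1 := by
        simp only [l]
        rw [min_eq_left]
        exact (by linarith : (1 : ℝ) ≤ ‖y.ofLp‖ - 1).trans (le_max_right _ _)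
      ext i
      simp [F, h3]
  exact hFne x.ofLp (by simpa using hx)

theorem Continuous.exists_mem_faces_of_lt {n m : ℕ} (hnm : n < m)
    {F : (Fin m → I) → Fin n → ℝ} (hF : Continuous F) :
    ∃ i x y, x i = 0 ∧ y i = 1 ∧ F x = F y := by
  by_contra! h
  have hcl : ∀ i (t : I), IsCompact (F '' {x | x i = t}) := fun i t =>
    (isClosed_eq (continuous_apply i) continuous_const).isCompact.image hF
  have hur : ∀ i : Fin m, ∃ e : C(Fin n → ℝ, ℝ), EqOn e 0 (F '' {x | x i = 0}) ∧
      EqOn e 1 (F '' {x | x i = 1}) ∧ ∀ x, e x ∈ Icc (0 : ℝ) 1 := fun i =>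
    exists_continuous_zero_one_of_isClosed (hcl i 0).isClosed (hcl i 1).isClosed <| by
      rw [Set.disjoint_left]
      rintro _ ⟨x, hx, rfl⟩ ⟨y, hy, hxy⟩
      exact h i x y hx hy hxy.symm
  choose e he0 he1 _ using hur
  let e' : C(Fin n → ℝ, Fin m → ℝ) := ⟨fun y i => e i y, by fun_prop⟩
  obtain ⟨g, hg, hge⟩ : ∃ g : C(Fin n → ℝ, Fin m → ℝ), ContDiff ℝ 1 g ∧
      ∀ y ∈ range F, dist (e' y) (g y) < 1 / 4 := by
    have hd := ContinuousMap.dense_setOfPred_contDiff e'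
    rw [mem_closure_iff_nhds_basis (nhds_basis_uniformity
      Metric.uniformity_basis_dist.compactConvergenceUniformity)] at hd
    obtain ⟨g, hg, hge⟩ := hd (range F, 1 / 4) ⟨isCompact_range hF, by norm_num⟩
    rw [mem_ofPred_eq] at hg
    exact ⟨g, hg.of_le (by exact_mod_cast le_top), fun y hy => (dist_comm _ _).trans_lt (hge y hy)⟩
  obtain ⟨v, hv, hvr⟩ := (ContDiff.dense_compl_range_of_finrank_lt_finrank hg
    (by simpa using hnm)).exists_dist_lt (fun _ : Fin m => (1 / 2 : ℝ))
      (by norm_num : (0 : ℝ) < 1 / 4)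
  have hcoord : ∀ x i, |e i (F x) - g (F x) i| < 1 / 4 := fun x i =>
    (dist_le_pi_dist (e' (F x)) (g (F x)) i).trans_lt (hge _ ⟨x, rfl⟩)
  have hvc : ∀ i, |1 / 2 - v i| < 1 / 4 := fun i => (dist_le_pi_dist _ v i).trans_lt hvr
  obtain ⟨x, hx⟩ := Continuous.exists_eq_zero_of_neg_of_pos (f := fun x i => g (F x) i - v i)
    (by fun_prop)
    (fun x i hx => by
      have h1 := abs_lt.1 (hcoord x i)
      have h2 := abs_lt.1 (hvc i)
      have h3 : e i (F x) = 0 := he0 i ⟨x, hx, rfl⟩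
      linarith [h1.1, h2.2])
    (fun x i hx => by
      have h1 := abs_lt.1 (hcoord x i)
      have h2 := abs_lt.1 (hvc i)
      have h3 : e i (F x) = 1 := he1 i ⟨x, hx, rfl⟩
      linarith [h1.2, h2.1])
  exact hv ⟨F x, funext fun i => sub_eq_zero.1 (congrFun hx i)⟩

theorem TopologicalSpace.NonemptyCompacts.continuous_sSup_image {X : Type u} [TopologicalSpace X]
    {f : X → ℝ} (hf : Continuous f) :
    Continuous fun A : NonemptyCompacts X => sSup (f '' (A : Set X)) := by
  rw [OrderTopology.continuous_iff]
  intro a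
  constructor
  · convert NonemptyCompacts.isOpen_inter_nonempty_of_isOpen
      (isOpen_Ioi.preimage hf : IsOpen (f ⁻¹' Ioi a)) using 1
    ext A
    simp only [mem_preimage, mem_Ioi, mem_ofPred_eq]
    rw [lt_csSup_iff (A.isCompact.image hf).bddAbove (A.nonempty.image f)]
    simp [Set.Nonempty]
  · convert NonemptyCompacts.isOpen_subsets_of_isOpen
      (isOpen_Iio.preimage hf : IsOpen (f ⁻¹' Iio a)) using 1
    ext A
    simp only [mem_preimage, mem_Iio, mem_ofPred_eq]
    rw [A.isCompact.sSup_lt_iff_of_continuous A.nonempty hf.continuousOn]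
    rfl

theorem IsArcSet.isCompact {X : Type u} [TopologicalSpace X] {A : Set X} (h : IsArcSet A) :
    IsCompact A := by
  obtain ⟨h⟩ := h
  exact isCompact_iff_compactSpace.2 h.symm.compactSpace

/-- An arc ending at `p` carries an injective nonnegative coordinate that vanishes at `p`. -/
theorem IsArcEndpoint.exists_coordinate {X : Type u} [TopologicalSpace X] {A : Set X} {p : X}
    (h : IsArcEndpoint A p) : p ∈ A ∧ ∃ ρ : X → ℝ, ContinuousOn ρ A ∧ ρ p = 0 ∧ InjOn ρ A ∧
      (∀ x ∈ A, 0 ≤ ρ x) ∧ ∀ x ∉ A, ρ x = 0 := by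
  classical
  obtain ⟨b, h, h0, h1⟩ := h
  have hp : p ∈ A := h0 ▸ Subtype.coe_prop _
  have hp0 : h.symm ⟨p, hp⟩ = ⟨0, by norm_num⟩ := by
    rw [Homeomorph.symm_apply_eq]
    exact Subtype.ext h0.symm
  refine ⟨hp, fun x => if hx : x ∈ A then (h.symm ⟨x, hx⟩ : ℝ) else 0, ?_, ?_, ?_, ?_, ?_⟩
  · rw [continuousOn_iff_continuous_domRestrict]
    convert continuous_subtype_val.comp h.symm.continuous using 1
    ext x
    simp
  · simp [hp, hp0]
  · intro x hx y hy hxy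
    simp only [hx, hy, dif_pos] at hxy
    simpa using h.symm.injective (Subtype.ext hxy)
  · intro x hx
    simp only [hx, dif_pos]
    exact (h.symm ⟨x, hx⟩).2.1
  · intro x hx
    simp [hx]

theorem HasOrdIn.exists_continuous_injOn {X : Type u} [MetricSpace X] {p : X} {n : ℕ}
    (h : HasOrdIn univ p n) : ∃ W : Set (CP X p), IsOpen W ∧ W.Nonempty ∧
      ∃ φ : CP X p → Fin n → ℝ, Continuous φ ∧ InjOn φ W := by
  obtain ⟨N, -, -, ⟨U, hU, hpU, hUN⟩, -, L, hLarc, hLN, hLp, hLL⟩ := h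
  rw [inter_univ] at hUN
  have hρ : ∀ i, ∃ f : X → ℝ, Continuous f ∧ f p = 0 ∧ InjOn f (L i) ∧ (∀ x ∈ L i, 0 ≤ f x) ∧
      ∀ x ∈ N, x ∉ L i → f x = 0 := by
    intro i
    obtain ⟨hp, ρ, hρc, hρp, hρi, hρ0, hρ'⟩ := (hLp i).exists_coordinate
    let M : Set X := ⋃ j ∈ {j | j ≠ i}, L j
    have hLc : IsClosed (L i) := (hLarc i).isCompact.isClosed
    have hMc : IsClosed M := (toFinite _).isClosed_biUnion fun j _ => (hLarc j).isCompact.isClosed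
    have hM : ∀ x ∈ M, ρ x = 0 := by
      intro x hx
      obtain ⟨j, hj, hxj⟩ := mem_iUnion₂.1 hx
      by_cases hxi : x ∈ L i
      · have : x ∈ L j ∩ L i := ⟨hxj, hxi⟩
        rw [hLL j i hj] at this
        rw [this, hρp]
      · exact hρ' x hxi
    have hcont : ContinuousOn ρ (L i ∪ M) :=
      hρc.union_of_isClosed (continuousOn_const.congr hM) hLc hMc
    obtain ⟨f, hf⟩ := ContinuousMap.exists_restrict_eq (hLc.union hMc)
      ⟨_, continuousOn_iff_continuous_domRestrict.1 hcont⟩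
    have hfρ : ∀ x ∈ L i ∪ M, f x = ρ x := fun x hx => DFunLike.congr_fun hf ⟨x, hx⟩
    refine ⟨f, f.continuous, ?_, ?_, ?_, ?_⟩
    · rw [hfρ p (.inl hp), hρp]
    · intro x hx y hy hxy
      rw [hfρ x (.inl hx), hfρ y (.inl hy)] at hxy
      exact hρi hx hy hxy
    · intro x hx
      rw [hfρ x (.inl hx)]
      exact hρ0 x hx
    · intro x hx hxi
      have hxM : x ∈ M := by
        rw [← hLN] at hx
        obtain ⟨j, hj⟩ := mem_iUnion.1 hx
        exact mem_iUnion₂.2 ⟨j, fun h => hxi (h ▸ hj), hj⟩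
      rw [hfρ x (.inr hxM), hM x hxM]
  choose f hfc hfp hfi hf0 hfN using hρ
  let W : Set (CP X p) := {A | A.set ⊆ U}
  have key : ∀ A ∈ W, ∀ B ∈ W, (∀ i, sSup (f i '' A.set) = sSup (f i '' B.set)) →
      A.set ⊆ B.set := by
    intro A hA B hB hAB x hx
    have hxN := hUN (hA hx)
    obtain ⟨i, hi⟩ := mem_iUnion.1 (hLN ▸ hxN)
    have hBc : IsCompact (f i '' B.set) := B.1.isCompact.image (hfc i)
    have hBs : sSup (f i '' B.set) ∈ f i '' B.set := hBc.sSup_mem (B.1.nonempty.image _)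
    have hxle : f i x ≤ sSup (f i '' B.set) :=
      hAB i ▸ le_csSup (A.1.isCompact.image (hfc i)).bddAbove ⟨x, hx, rfl⟩
    have h0 : (0 : ℝ) ∈ f i '' B.set := ⟨p, B.2.2, hfp i⟩
    obtain ⟨y, hy, hyx⟩ :=
      (B.2.1.image _ (hfc i).continuousOn).isPreconnected.ordConnected.out h0 hBs
      ⟨hf0 i x hi, hxle⟩
    have hpi : p ∈ L i := (hLp i).exists_coordinate.1
    by_cases hyi : y ∈ L i
    · exact hfi i hyi hi hyx ▸ hy
    · have : f i x = f i p := by rw [← hyx, hfN i y (hUN (hB hy)) hyi, hfp]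
      exact hfi i hi hpi this ▸ B.2.2
  refine ⟨W, ?_, ⟨⟨{p}, ?_, ?_⟩, ?_⟩, fun A i => sSup (f i '' A.set), ?_, ?_⟩
  · exact (NonemptyCompacts.isOpen_subsets_of_isOpen hU).preimage continuous_subtype_val
  · simpa using isConnected_singleton
  · simp
  · exact singleton_subset_iff.2 hpU
  · exact continuous_pi fun i =>
      (NonemptyCompacts.continuous_sSup_image (hfc i)).comp continuous_subtype_val
  · intro A hA B hB hAB
    have := (key A hA B hB (congrFun hAB)).antisymm (key B hB A hA fun i => (congrFun hAB i).symm)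
    exact Subtype.ext (NonemptyCompacts.ext this)

theorem Path.exists_continuous_ne_mem {M : Type*} [TopologicalSpace M] [T2Space M] {a b : M}
    (γ : Path a b) (hab : a ≠ b) {V : Set M} (hV : IsOpen V) (ha : a ∈ V) :
    ∃ γ' : I → M, Continuous γ' ∧ (∀ s, γ' s ∈ V ∧ γ' s ∈ range γ) ∧ γ' 0 ≠ γ' 1 := by
  by_contra! h
  have hclopen : IsClopen {t : ℝ | γ.extend t = a} := by
    refine ⟨isClosed_eq γ.continuous_extend continuous_const, isOpen_iff_mem_nhds.2 ?_⟩
    intro t ht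
    rw [mem_ofPred_eq] at ht
    have hnhds : γ.extend ⁻¹' V ∈ 𝓝 t :=
      γ.continuous_extend.continuousAt.preimage_mem_nhds (hV.mem_nhds (by rwa [ht]))
    obtain ⟨ε, hε, hball⟩ := Metric.mem_nhds_iff.1 hnhds
    refine Metric.mem_nhds_iff.2 ⟨ε, hε, fun t' ht' => ?_⟩
    rw [mem_ofPred_eq]
    have := h (fun s => γ.extend (t + s * (t' - t)))
      (γ.continuous_extend.comp (by fun_prop)) fun s => ⟨hball ?_, ?_⟩
    · simpa [ht] using this.symm
    · exact (convex_ball t ε).add_smul_sub_mem (Metric.mem_ball_self hε) ht' s.2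
    · rw [← γ.extend_range]
      exact mem_range_self _
  have h0 : (0 : ℝ) ∈ {t : ℝ | γ.extend t = a} := by simp
  have h1 : (1 : ℝ) ∈ {t : ℝ | γ.extend t = a} := by
    rw [hclopen.eq_univ ⟨0, h0⟩]
    trivial
  exact hab (by simpa using h1.symm)

section CP

variable {Y : Type u} [MetricSpace Y] {q : Y}

/-- The map between hyperspaces `C(q,Y)` induced by a self-map of `Y` that fixes `q`. -/
noncomputable def CP.map (f : Y → Y) (hf : Continuous f) (hq : f q = q) (A : CP Y q) : CP Y q :=
  ⟨A.1.map f hf, by simpa using A.2.1.image f hf.continuousOn, by simpa using ⟨q, A.2.2, hq⟩⟩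

theorem CP.set_map (f : Y → Y) (hf : Continuous f) (hq : f q = q) (A : CP Y q) :
    (CP.map f hf hq A).set = f '' A.set :=
  NonemptyCompacts.coe_map _ _

theorem CP.continuous_map (f : Y → Y) (hf : Continuous f) (hq : f q = q) :
    Continuous (CP.map f hf hq) :=
  (hf.nonemptyCompacts_map.comp continuous_subtype_val).subtype_mk _

theorem CP.set_injective {A B : CP Y q} (h : A.set = B.set) : A = B :=
  Subtype.ext (NonemptyCompacts.ext h)

theorem CP.mem_set (A : CP Y q) : q ∈ A.set := A.2.2

theorem CP.exists_continuous_iUnion (q : Y) (ι : Type*) [Finite ι] [Nonempty ι] :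
    ∃ G : (ι → CP Y q) → CP Y q, Continuous G ∧ ∀ A, (G A).set = ⋃ i, (A i).set := by
  have := Fintype.ofFinite ι
  have hcoe : ∀ A : ι → CP Y q, ((Finset.univ.sup' Finset.univ_nonempty fun i => (A i).1 :
      NonemptyCompacts Y) : Set Y) = ⋃ i, (A i).set := by
    intro A
    rw [Finset.apply_sup'_eq_sup'_comp Finset.univ_nonempty
      ((↑) : NonemptyCompacts Y → Set Y) (fun _ _ => NonemptyCompacts.coe_sup _ _),
      Finset.sup'_univ_eq_ciSup]
    rfl
  refine ⟨fun A => ⟨Finset.univ.sup' Finset.univ_nonempty fun i => (A i).1, ?_, ?_⟩, ?_, hcoe⟩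
  · rw [hcoe]
    exact ⟨⟨q, mem_iUnion.2 ⟨Classical.arbitrary ι, (A _).mem_set⟩⟩, isPreconnected_iUnion
      ⟨q, mem_iInter.2 fun i => (A i).mem_set⟩ fun i => (A i).2.1.isPreconnected⟩
  · rw [hcoe]
    exact mem_iUnion.2 ⟨Classical.arbitrary ι, (A _).mem_set⟩
  · refine Continuous.subtype_mk (Continuous.finset_sup'_apply _ fun i _ => ?_) _
    exact continuous_subtype_val.comp (continuous_apply i)

/-- The point `q` splits `Y` into the closed branches `B i`, which meet only at `q`. -/
structure IsBranching {ι : Type*} (B : ι → Set Y) (q : Y) : Prop where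
  isClosed : ∀ i, IsClosed (B i)
  mem : ∀ i, q ∈ B i
  iUnion_eq : ⋃ i, B i = univ
  inter_eq : ∀ i j, i ≠ j → B i ∩ B j = {q}
  ne_singleton : ∀ i, B i ≠ {q}

theorem IsBranching.exists_retraction {ι : Type*} [Finite ι] {B : ι → Set Y}
    (h : IsBranching B q) (i : ι) : ∃ r : Y → Y, Continuous r ∧ (∀ x ∈ B i, r x = x) ∧
      ∀ j, j ≠ i → ∀ x ∈ B j, r x = q := by
  classical
  let M : Set Y := ⋃ j ∈ {j | j ≠ i}, B j
  have hM : IsClosed M := (toFinite _).isClosed_biUnion fun j _ => h.isClosed j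
  let r : Y → Y := fun x => if x ∈ B i then x else q
  have h1 : ∀ x ∈ B i, r x = x := fun x hx => if_pos hx
  have h2 : ∀ j, j ≠ i → ∀ x ∈ B j, r x = q := by
    intro j hj x hx
    by_cases hxi : x ∈ B i
    · have hxq : x ∈ B j ∩ B i := ⟨hx, hxi⟩
      rw [h.inter_eq j i hj] at hxq
      rw [h1 x hxi, hxq]
    · exact if_neg hxi
  have hu : B i ∪ M = univ := by
    refine eq_univ_of_forall fun x => ?_
    obtain ⟨j, hj⟩ := mem_iUnion.1 (h.iUnion_eq ▸ mem_univ x)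
    by_cases hji : j = i
    · exact .inl (hji ▸ hj)
    · exact .inr (mem_iUnion₂.2 ⟨j, hji, hj⟩)
  refine ⟨r, ?_, h1, h2⟩
  rw [← continuousOn_univ, ← hu]
  refine (continuousOn_id.congr h1).union_of_isClosed
    ((continuousOn_const (c := q)).congr fun x hx => ?_) (h.isClosed i) hM
  obtain ⟨j, hj, hxj⟩ := mem_iUnion₂.1 hx
  exact h2 j hj x hxj

theorem IsBranching.exists_cube [CompactSpace Y] [ConnectedSpace Y] [PathConnectedSpace (CP Y q)]
    {ι : Type*} [Finite ι] {B : ι → Set Y} (h : IsBranching B q) {W : Set (CP Y q)}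
    (hW : IsOpen W) (hne : W.Nonempty) :
    ∃ g : (ι → I) → CP Y q, Continuous g ∧ (∀ x, g x ∈ W) ∧
      ∀ i x y, x i = 0 → y i = 1 → g x ≠ g y := by
  have : Nonempty ι := (mem_iUnion.1 (h.iUnion_eq ▸ mem_univ q)).nonempty
  obtain ⟨A, hA⟩ := hne
  choose r hrc hri hrj using h.exists_retraction
  have hrq : ∀ i, r i q = q := fun i => hri i q (h.mem i)
  have hrr : ∀ i x, r i (r i x) = r i x := by
    intro i x
    obtain ⟨j, hj⟩ := mem_iUnion.1 (h.iUnion_eq ▸ mem_univ x)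
    by_cases hji : j = i
    · rw [hri i x (hji ▸ hj)]
      exact hri i x (hji ▸ hj)
    · rw [hrj i j hji x hj, hrq]
  have hrr' : ∀ i j x, i ≠ j → r j (r i x) = q := by
    intro i j x hij
    obtain ⟨k, hk⟩ := mem_iUnion.1 (h.iUnion_eq ▸ mem_univ x)
    by_cases hki : k = i
    · rw [hri i x (hki ▸ hk)]
      exact hrj j i hij x (hki ▸ hk)
    · rw [hrj i k hki x hk, hrq]
  let R : ι → CP Y q → CP Y q := fun i => CP.map (r i) (hrc i) (hrq i)
  have hR : ∀ i C, (R i C).set = r i '' C.set := fun i C => CP.set_map _ _ _ _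
  have hRc : ∀ i, Continuous (R i) := fun i => CP.continuous_map _ _ _
  have hRR : ∀ i C, R i (R i C) = R i C := by
    intro i C
    refine CP.set_injective ?_
    rw [hR, hR, image_image]
    simp only [hrr]
  obtain ⟨G, hGc, hG⟩ := CP.exists_continuous_iUnion q ι
  have hRG : ∀ (C : ι → CP Y q), (∀ i, R i (C i) = C i) → ∀ j, R j (G C) = C j := by
    intro C hC j
    refine CP.set_injective ?_
    rw [hR, hG, image_iUnion]
    apply Subset.antisymm
    · refine iUnion_subset fun i => ?_
      by_cases hij : i = j
      · subst hij
        rw [← hR, hC]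
      · rw [← hC i, hR, image_image]
        rintro _ ⟨x, -, rfl⟩
        simp only [hrr' i j x hij]
        exact (C j).mem_set
    · refine Subset.trans ?_ (subset_iUnion _ j)
      rw [← hR, hC]
  have hGA : G (fun i => R i A) = A := by
    refine CP.set_injective ?_
    rw [hG]
    simp only [hR]
    apply Subset.antisymm
    · rintro x hx
      obtain ⟨i, y, hy, rfl⟩ := mem_iUnion.1 hx
      obtain ⟨k, hk⟩ := mem_iUnion.1 (h.iUnion_eq ▸ mem_univ y)
      by_cases hki : k = i
      · rwa [hri i y (hki ▸ hk)]
      · rw [hrj i k hki y hk]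
        exact A.mem_set
    · intro x hx
      obtain ⟨k, hk⟩ := mem_iUnion.1 (h.iUnion_eq ▸ mem_univ x)
      exact mem_iUnion.2 ⟨k, x, hx, hri k x hk⟩
  obtain ⟨V, hV, hVW⟩ := isOpen_pi_iff'.1 (hW.preimage hGc) (fun i => R i A)
    (by simpa [hGA] using hA)
  have hC : ∀ i, ∃ C, R i A ≠ R i C := by
    intro i
    by_contra! hC
    let C₀ : CP Y q := ⟨{q}, by simpa using isConnected_singleton, by simp⟩
    let C₁ : CP Y q := ⟨⊤, by simpa using isConnected_univ, by simp⟩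
    have h01 : r i '' {q} = r i '' univ := by
      have := congrArg CP.set ((hC C₀).symm.trans (hC C₁))
      rwa [hR, hR] at this
    rw [image_singleton, hrq] at h01
    refine h.ne_singleton i (Subset.antisymm (fun x hx => ?_) (singleton_subset_iff.2 (h.mem i)))
    rw [h01]
    exact ⟨x, mem_univ x, hri i x hx⟩
  choose C hC using hC
  have hγ : ∀ i, ∃ γ : I → CP Y q, Continuous γ ∧ (∀ s, γ s ∈ V i ∧ R i (γ s) = γ s) ∧
      γ 0 ≠ γ 1 := by
    intro i
    obtain ⟨γ, hγc, hγ, hne⟩ := ((PathConnectedSpace.somePath A (C i)).map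
      (hRc i)).exists_continuous_ne_mem (hC i) (hV i).1 (hV i).2
    refine ⟨γ, hγc, fun s => ⟨(hγ s).1, ?_⟩, hne⟩
    obtain ⟨t, ht⟩ := (hγ s).2
    rw [← ht]
    exact hRR i _
  choose γ hγc hγ hγne using hγ
  refine ⟨fun x => G fun i => γ i (x i), by fun_prop, fun x => hVW fun i _ => (hγ i _).1, ?_⟩
  intro i x y hx hy hxy
  have := congrArg (R i) hxy
  rw [hRG _ fun i => (hγ i _).2, hRG _ fun i => (hγ i _).2, hx, hy] at this
  exact hγne i this

end CP

section Arc

variable {X : Type u} [TopologicalSpace X] {A B : Set X} {a b c : X}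

theorem IsArcFromTo.left_mem (h : IsArcFromTo A a b) : a ∈ A := by
  obtain ⟨h, rfl, -⟩ := h
  exact Subtype.coe_prop _

theorem IsArcFromTo.isArcSet (h : IsArcFromTo A a b) : IsArcSet A := by
  obtain ⟨h, -, -⟩ := h
  exact ⟨h.symm⟩

theorem IsArcFromTo.isArcEndpoint (h : IsArcFromTo A a b) : IsArcEndpoint A a := ⟨b, h⟩

theorem IsArcSet.exists_isArcFromTo (h : IsArcSet A) : ∃ a b, IsArcFromTo A a b := by
  obtain ⟨h⟩ := h
  exact ⟨_, _, h.symm, rfl, rfl⟩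

theorem IsArcFromTo.eq_or_eq_of_isArcEndpoint (h : IsArcFromTo A a b) {x : X}
    (hx : IsArcEndpoint A x) : x = a ∨ x = b := by
  obtain ⟨h, rfl, rfl⟩ := h
  obtain ⟨-, k, rfl, -⟩ := hx
  let f : I ≃ₜ I := k.trans h.symm
  have hf : ∀ t, k t = h (f t) := fun t => (h.apply_symm_apply _).symm
  rcases f.continuous.strictMono_of_inj f.injective with hm | hm
  · obtain ⟨s, hs⟩ := f.surjective 0
    have h0 : f 0 ≤ f s := hm.monotone nonneg'
    rw [hs] at h0
    exact .inl (congrArg Subtype.val ((hf 0).trans (congrArg h (le_antisymm h0 nonneg'))))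
  · obtain ⟨s, hs⟩ := f.surjective 1
    have h1 : f s ≤ f 0 := hm.antitone nonneg'
    rw [hs] at h1
    exact .inr (congrArg Subtype.val ((hf 0).trans (congrArg h (le_antisymm le_one' h1))))

variable [T2Space X]

theorem isArcFromTo_iff : IsArcFromTo A a b ↔
    ∃ γ : I → X, Continuous γ ∧ Function.Injective γ ∧ range γ = A ∧ γ 0 = a ∧ γ 1 = b := by
  constructor
  · rintro ⟨h, h0, h1⟩
    refine ⟨fun t => h t, continuous_subtype_val.comp h.continuous,
      Subtype.val_injective.comp h.injective, ?_, h0, h1⟩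
    exact (h.surjective.range_comp Subtype.val).trans Subtype.range_coe
  · rintro ⟨γ, hγ, hi, rfl, h0, h1⟩
    exact ⟨(hγ.isClosedEmbedding hi).toIsEmbedding.toHomeomorph, h0, h1⟩

theorem IsArcFromTo.ne (h : IsArcFromTo A a b) : a ≠ b := by
  obtain ⟨γ, -, hi, -, rfl, rfl⟩ := isArcFromTo_iff.1 h
  exact hi.ne zero_ne_one

theorem IsArcFromTo.symm (h : IsArcFromTo A a b) : IsArcFromTo A b a := by
  obtain ⟨γ, hγ, hi, rfl, rfl, rfl⟩ := isArcFromTo_iff.1 h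
  exact isArcFromTo_iff.2 ⟨γ ∘ σ, hγ.comp continuous_symm, hi.comp symm_bijective.injective,
    symm_bijective.surjective.range_comp γ, by simp, by simp⟩

theorem IsArcFromTo.right_mem (h : IsArcFromTo A a b) : b ∈ A := h.symm.left_mem

theorem IsArcFromTo.of_injOn {f : ℝ → X} {s t : ℝ} (hst : s < t) (hf : Continuous f)
    (hi : InjOn f (Icc s t)) : IsArcFromTo (f '' Icc s t) (f s) (f t) := by
  have hmem : ∀ u : I, s + u * (t - s) ∈ Icc s t := by
    intro u
    constructor
    · nlinarith [u.2.1]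
    · nlinarith [u.2.2]
  refine isArcFromTo_iff.2 ⟨fun u => f (s + u * (t - s)), by fun_prop, ?_, ?_, by simp, by simp⟩
  · intro u v huv
    have := hi (hmem u) (hmem v) huv
    exact Subtype.ext (mul_right_cancel₀ (sub_pos.2 hst).ne' (add_left_cancel this))
  · apply Subset.antisymm
    · rintro _ ⟨u, rfl⟩
      exact ⟨_, hmem u, rfl⟩
    · rintro _ ⟨x, hx, rfl⟩
      have hst' := sub_pos.2 hst
      refine ⟨⟨(x - s) / (t - s), div_nonneg (sub_nonneg.2 hx.1) hst'.le,
        (div_le_one hst').2 (by linarith [hx.2])⟩, ?_⟩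
      simp only [div_mul_cancel₀ _ hst'.ne', add_sub_cancel]

theorem IsArcFromTo.image_Icc {γ : I → X} (hγ : Continuous γ) (hi : Function.Injective γ) {s t : I}
    (hst : s < t) : IsArcFromTo (γ '' Icc s t) (γ s) (γ t) := by
  have hinj : InjOn (fun x => γ (projIcc 0 1 zero_le_one x)) (Icc (s : ℝ) t) := by
    intro x hx y hy hxy
    have hx' : x ∈ Icc (0 : ℝ) 1 := ⟨s.2.1.trans hx.1, hx.2.trans t.2.2⟩
    have hy' : y ∈ Icc (0 : ℝ) 1 := ⟨s.2.1.trans hy.1, hy.2.trans t.2.2⟩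
    have := hi hxy
    rwa [projIcc_of_mem _ hx', projIcc_of_mem _ hy', Subtype.mk.injEq] at this
  convert IsArcFromTo.of_injOn (show (s : ℝ) < t from hst) (hγ.comp continuous_projIcc) hinj using 1
  · apply Subset.antisymm
    · rintro _ ⟨u, hu, rfl⟩
      exact ⟨u, hu, by simp⟩
    · rintro _ ⟨x, hx, rfl⟩
      exact ⟨⟨x, s.2.1.trans hx.1, hx.2.trans t.2.2⟩, hx,
        by simp [projIcc_of_mem _ (⟨s.2.1.trans hx.1, hx.2.trans t.2.2⟩ : x ∈ Icc (0 : ℝ) 1)]⟩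
  · simp
  · simp

theorem IsArcFromTo.exists_subarc (h : IsArcFromTo A a b) {x y : X} (hx : x ∈ A) (hy : y ∈ A)
    (hxy : x ≠ y) : ∃ C ⊆ A, IsArcFromTo C x y := by
  obtain ⟨γ, hγ, hi, rfl, rfl, rfl⟩ := isArcFromTo_iff.1 h
  obtain ⟨s, rfl⟩ := hx
  obtain ⟨t, rfl⟩ := hy
  rcases lt_trichotomy s t with hst | rfl | hst
  · exact ⟨_, image_subset_range _ _, .image_Icc hγ hi hst⟩
  · exact absurd rfl hxy
  · exact ⟨_, image_subset_range _ _, (IsArcFromTo.image_Icc hγ hi hst).symm⟩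

theorem IsArcFromTo.exists_split (h : IsArcFromTo A a b) {x : X} (hx : x ∈ A) (hxa : x ≠ a)
    (hxb : x ≠ b) : ∃ A₁ A₂, IsArcFromTo A₁ a x ∧ IsArcFromTo A₂ x b ∧ A₁ ∪ A₂ = A ∧
      A₁ ∩ A₂ = {x} := by
  obtain ⟨γ, hγ, hi, rfl, rfl, rfl⟩ := isArcFromTo_iff.1 h
  obtain ⟨s, rfl⟩ := hx
  refine ⟨γ '' Icc 0 s, γ '' Icc s 1, .image_Icc hγ hi ?_, .image_Icc hγ hi ?_, ?_, ?_⟩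
  · exact lt_of_le_of_ne nonneg' fun h => hxa (h ▸ rfl)
  · exact lt_of_le_of_ne le_one' fun h => hxb (h ▸ rfl)
  · rw [← image_union, Icc_union_Icc_eq_Icc nonneg' le_one', ← image_univ]
    congr 1
    exact eq_univ_of_forall fun t => ⟨nonneg', le_one'⟩
  · rw [← image_inter hi, Icc_inter_Icc_eq_singleton nonneg' le_one', image_singleton]

/-- The concatenation of two arcs from `a` to `b` and from `b` to `c`, parametrized by `[0,2]`. -/
theorem IsArcFromTo.exists_concat (hA : IsArcFromTo A a b) (hB : IsArcFromTo B b c) :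
    ∃ f : ℝ → X, Continuous f ∧ f 0 = a ∧ f 1 = b ∧ f 2 = c ∧ f '' Icc 0 1 = A ∧ f '' Icc 1 2 = B ∧
      InjOn f (Icc 0 1) ∧ InjOn f (Icc 1 2) := by
  obtain ⟨γ, hγ, hγi, rfl, rfl, hb⟩ := isArcFromTo_iff.1 hA
  obtain ⟨δ, hδ, hδi, rfl, hb', rfl⟩ := isArcFromTo_iff.1 hB
  let f : ℝ → X := fun t => if t ≤ 1 then γ (projIcc 0 1 zero_le_one t)
    else δ (projIcc 0 1 zero_le_one (t - 1))
  have hf1 : ∀ u : I, f u = γ u := fun u => by simp [f, u.2.2]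
  have hf2 : ∀ u : I, f (1 + u) = δ u := by
    intro u
    rcases eq_or_ne u 0 with rfl | hu
    · simp [f, hb, hb']
    · have : ¬ (1 + (u : ℝ) ≤ 1) := by simpa using pos_iff_ne_zero.2 hu
      simp [f, this]
  have he1 : ∀ x ∈ Icc (0 : ℝ) 1, ∃ u : I, x = u := fun x hx => ⟨⟨x, hx⟩, rfl⟩
  have he2 : ∀ x ∈ Icc (1 : ℝ) 2, ∃ u : I, x = 1 + u := fun x hx =>
    ⟨⟨x - 1, by linarith [hx.1], by linarith [hx.2]⟩, by simp⟩
  refine ⟨f, ?_, ?_, ?_, ?_, ?_, ?_, ?_, ?_⟩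
  · refine Continuous.if_le (by fun_prop) (by fun_prop) continuous_id continuous_const ?_
    rintro x rfl
    simp [hb, hb']
  · simpa using hf1 0
  · simpa [hb] using hf1 1
  · convert hf2 1 using 2
    norm_num
  · apply Subset.antisymm
    · rintro _ ⟨x, hx, rfl⟩
      obtain ⟨u, rfl⟩ := he1 x hx
      exact ⟨u, (hf1 u).symm⟩
    · rintro _ ⟨u, rfl⟩
      exact ⟨u, u.2, hf1 u⟩
  · apply Subset.antisymm
    · rintro _ ⟨x, hx, rfl⟩
      obtain ⟨u, rfl⟩ := he2 x hx
      exact ⟨u, (hf2 u).symm⟩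
    · rintro _ ⟨u, rfl⟩
      exact ⟨1 + u, ⟨by linarith [u.2.1], by linarith [u.2.2]⟩, hf2 u⟩
  · intro x hx y hy hxy
    obtain ⟨u, rfl⟩ := he1 x hx
    obtain ⟨v, rfl⟩ := he1 y hy
    rw [hf1, hf1] at hxy
    rw [hγi hxy]
  · intro x hx y hy hxy
    obtain ⟨u, rfl⟩ := he2 x hx
    obtain ⟨v, rfl⟩ := he2 y hy
    rw [hf2, hf2] at hxy
    rw [hδi hxy]

theorem IsArcFromTo.union (hA : IsArcFromTo A a b) (hB : IsArcFromTo B b c) (hAB : A ∩ B = {b}) :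
    IsArcFromTo (A ∪ B) a c := by
  obtain ⟨f, hf, rfl, rfl, rfl, rfl, rfl, h1, h2⟩ := hA.exists_concat hB
  have key : ∀ x ∈ Icc (0 : ℝ) 1, ∀ y ∈ Icc (1 : ℝ) 2, f x = f y → x = y := by
    intro x hx y hy hxy
    have hb : f x ∈ f '' Icc 0 1 ∩ f '' Icc 1 2 := ⟨⟨x, hx, rfl⟩, ⟨y, hy, hxy.symm⟩⟩
    rw [hAB] at hb
    have hx1 : x = 1 := h1 hx (by simp) hb
    have hy1 : y = 1 := h2 hy (by simp) (hxy.symm.trans hb)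
    rw [hx1, hy1]
  rw [← image_union, Icc_union_Icc_eq_Icc zero_le_one one_le_two]
  refine IsArcFromTo.of_injOn two_pos hf fun x hx y hy hxy => ?_
  rcases le_total x 1 with hx1 | hx1 <;> rcases le_total y 1 with hy1 | hy1
  · exact h1 ⟨hx.1, hx1⟩ ⟨hy.1, hy1⟩ hxy
  · exact key x ⟨hx.1, hx1⟩ y ⟨hy1, hy.2⟩ hxy
  · exact (key y ⟨hy.1, hy1⟩ x ⟨hx1, hx.2⟩ hxy.symm).symm
  · exact h2 ⟨hx1, hx.2⟩ ⟨hy1, hy.2⟩ hxy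

theorem IsArcFromTo.isSimpleClosedCurve (hA : IsArcFromTo A a b) (hB : IsArcFromTo B b a)
    (hAB : A ∩ B ⊆ {a, b}) : IsSimpleClosedCurve (A ∪ B) := by
  obtain ⟨f, hf, rfl, rfl, h02, rfl, rfl, h1, h2⟩ := hA.exists_concat hB
  have key : ∀ x ∈ Icc (0 : ℝ) 1, ∀ y ∈ Ico (1 : ℝ) 2, f x = f y → x = y := by
    intro x hx y hy hxy
    have hy' : y ∈ Icc (1 : ℝ) 2 := Ico_subset_Icc_self hy
    rcases hAB ⟨⟨x, hx, rfl⟩, ⟨y, hy', hxy.symm⟩⟩ with hb | hb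
    · have : y = 2 := h2 hy' (by simp) (by rw [h02, ← hxy, hb])
      exact absurd this hy.2.ne
    · have hx1 : x = 1 := h1 hx (by simp) hb
      have hy1 : y = 1 := h2 hy' (by simp) (hxy.symm.trans hb)
      rw [hx1, hy1]
  have hinj : InjOn f (Ico 0 2) := by
    intro x hx y hy hxy
    rcases le_total x 1 with hx1 | hx1 <;> rcases le_total y 1 with hy1 | hy1
    · exact h1 ⟨hx.1, hx1⟩ ⟨hy.1, hy1⟩ hxy
    · exact key x ⟨hx.1, hx1⟩ y ⟨hy1, hy.2⟩ hxy
    · exact (key y ⟨hy.1, hy1⟩ x ⟨hx1, hx.2⟩ hxy.symm).symm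
    · exact h2 ⟨hx1, hx.2.le⟩ ⟨hy1, hy.2.le⟩ hxy
  have : Fact ((0 : ℝ) < 2) := ⟨two_pos⟩
  let F : AddCircle (2 : ℝ) → X := AddCircle.liftIco 2 0 f
  have hFc : Continuous F := AddCircle.liftIco_zero_continuous h02.symm hf.continuousOn
  have hFi : Function.Injective F := by
    refine Function.Injective.comp (injOn_iff_injective.1 ?_) (AddCircle.equivIco 2 0).injective
    rwa [zero_add]
  have hFr : range F = f '' Icc 0 1 ∪ f '' Icc 1 2 := by
    rw [← image_union, Icc_union_Icc_eq_Icc zero_le_one one_le_two]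
    refine ((AddCircle.equivIco 2 0).surjective.range_comp _).trans ?_
    rw [range_domRestrict, zero_add, ← Ico_union_right zero_le_two, image_union, image_singleton,
      h02, eq_comm, union_eq_left]
    exact singleton_subset_iff.2 ⟨0, by simp, rfl⟩
  rw [← hFr]
  exact ⟨(hFc.isClosedEmbedding hFi).toIsEmbedding.toHomeomorph.symm.trans
    (AddCircle.homeomorphCircle two_ne_zero)⟩

end Arc

theorem exists_arcs_isArcEndpoint {Y : Type u} [TopologicalSpace Y] [T2Space Y] {𝒜 : Finset (Set Y)}
    (harc : ∀ A ∈ 𝒜, IsArcSet A) (hcov : ⋃₀ (𝒜 : Set (Set Y)) = univ)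
    (hend : ∀ A ∈ 𝒜, ∀ B ∈ 𝒜, A ≠ B → ∀ x ∈ A ∩ B, IsArcEndpoint A x ∧ IsArcEndpoint B x) (q : Y) :
    ∃ ℬ : Finset (Set Y), (∀ A ∈ ℬ, IsArcSet A) ∧ ⋃₀ (ℬ : Set (Set Y)) = univ ∧
      (∀ A ∈ ℬ, ∀ B ∈ ℬ, A ≠ B → ∀ x ∈ A ∩ B, IsArcEndpoint A x ∧ IsArcEndpoint B x) ∧
      ∀ A ∈ ℬ, q ∈ A → IsArcEndpoint A q := by
  classical
  by_cases h : ∀ A ∈ 𝒜, q ∈ A → IsArcEndpoint A q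
  · exact ⟨𝒜, harc, hcov, hend, h⟩
  push Not at h
  obtain ⟨A, hA, hqA, hq⟩ := h
  obtain ⟨a, b, hab⟩ := (harc A hA).exists_isArcFromTo
  have hqa : q ≠ a := fun h => hq (h ▸ hab.isArcEndpoint)
  have hqb : q ≠ b := fun h => hq (h ▸ hab.symm.isArcEndpoint)
  obtain ⟨A₁, A₂, h₁, h₂, hun, hin⟩ := hab.exists_split hqA hqa hqb
  have hs₁ : A₁ ⊆ A := hun ▸ subset_union_left
  have hs₂ : A₂ ⊆ A := hun ▸ subset_union_right
  have hmem : ∀ {C}, C ∈ insert A₁ (insert A₂ (𝒜.erase A)) →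
      C = A₁ ∨ C = A₂ ∨ C ∈ 𝒜 ∧ C ≠ A := by
    intro C hC
    simpa [and_comm] using hC
  have haux : ∀ C ∈ 𝒜, C ≠ A → ∀ x ∈ C, (x ∈ A₁ → IsArcEndpoint A₁ x ∧ IsArcEndpoint C x) ∧
      (x ∈ A₂ → IsArcEndpoint A₂ x ∧ IsArcEndpoint C x) := by
    intro C hC hCA x hx
    have hxA : x ∈ A → IsArcEndpoint A x ∧ IsArcEndpoint C x := fun h =>
      hend A hA C hC hCA.symm x ⟨h, hx⟩
    refine ⟨fun h => ⟨?_, (hxA (hs₁ h)).2⟩, fun h => ⟨?_, (hxA (hs₂ h)).2⟩⟩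
    · rcases hab.eq_or_eq_of_isArcEndpoint (hxA (hs₁ h)).1 with rfl | rfl
      · exact h₁.isArcEndpoint
      · have : x ∈ A₁ ∩ A₂ := ⟨h, h₂.right_mem⟩
        rw [hin] at this
        exact absurd this hqb.symm
    · rcases hab.eq_or_eq_of_isArcEndpoint (hxA (hs₂ h)).1 with rfl | rfl
      · have : x ∈ A₁ ∩ A₂ := ⟨h₁.left_mem, h⟩
        rw [hin] at this
        exact absurd this hqa.symm
      · exact h₂.symm.isArcEndpoint
  have h12 : ∀ x ∈ A₁, x ∈ A₂ → IsArcEndpoint A₁ x ∧ IsArcEndpoint A₂ x := by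
    intro x hx₁ hx₂
    have : x ∈ A₁ ∩ A₂ := ⟨hx₁, hx₂⟩
    rw [hin, mem_singleton_iff] at this
    exact this ▸ ⟨h₁.symm.isArcEndpoint, h₂.isArcEndpoint⟩
  refine ⟨insert A₁ (insert A₂ (𝒜.erase A)), ?_, ?_, ?_, ?_⟩
  · intro C hC
    rcases hmem hC with rfl | rfl | ⟨hC, -⟩
    · exact h₁.isArcSet
    · exact h₂.isArcSet
    · exact harc C hC
  · refine eq_univ_of_forall fun x => ?_
    obtain ⟨C, hC, hx⟩ := mem_sUnion.1 (hcov ▸ mem_univ x)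
    by_cases hCA : C = A
    · rw [hCA, ← hun] at hx
      rcases hx with hx | hx
      · exact ⟨A₁, by simp, hx⟩
      · exact ⟨A₂, by simp, hx⟩
    · exact ⟨C, by simpa [hCA] using .inr (.inr hC), hx⟩
  · rintro C hC D hD hCD x ⟨hxC, hxD⟩
    rcases hmem hC with rfl | rfl | ⟨hC', hCA⟩ <;> rcases hmem hD with rfl | rfl | ⟨hD', hDA⟩
    · exact absurd rfl hCD
    · exact h12 x hxC hxD
    · exact (haux D hD' hDA x hxD).1 hxC
    · exact (h12 x hxD hxC).symm
    · exact absurd rfl hCD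
    · exact (haux D hD' hDA x hxD).2 hxC
    · exact ((haux C hC' hCA x hxC).1 hxD).symm
    · exact ((haux C hC' hCA x hxC).2 hxD).symm
    · exact hend C hC' D hD' hCD x ⟨hxC, hxD⟩
  · intro C hC hqC
    rcases hmem hC with rfl | rfl | ⟨hC, hCA⟩
    · exact h₁.symm.isArcEndpoint
    · exact h₂.isArcEndpoint
    · exact absurd (hend C hC A hA hCA q ⟨hqC, hqA⟩).2 hq

theorem CP.exists_joined_of_subset_union_arc {Y : Type u} [MetricSpace Y] {q v w : Y} {T J : Set Y}
    (hT : IsClosed T) (hqT : q ∈ T) (hJ : IsArcFromTo J v w) (hJT : J ∩ T = {v}) (A : CP Y q)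
    (hA : A.set ⊆ T ∪ J) : ∃ A' : CP Y q, A'.set ⊆ T ∧ Joined A A' := by
  classical
  obtain ⟨γ, hγ, hγi, hγJ, rfl, rfl⟩ := isArcFromTo_iff.1 hJ
  have hJc : IsClosed J := hγJ ▸ (isCompact_range hγ).isClosed
  have hk : ContinuousOn (Function.invFun γ) J := by
    have hemb := hγ.isClosedEmbedding hγi
    rw [hemb.isEmbedding.continuousOn_iff]
    refine continuousOn_id.congr fun x hx => ?_
    rw [← hγJ] at hx
    exact Function.invFun_eq hx
  set k := Function.invFun γ
  have hkγ : ∀ t, k (γ t) = t := Function.leftInverse_invFun hγi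
  have hγk : ∀ x ∈ J, γ (k x) = x := fun x hx => by
    obtain ⟨t, rfl⟩ := hγJ ▸ hx
    rw [hkγ]
  have hCA : CompactSpace A.set := isCompact_iff_compactSpace.1 A.1.isCompact
  have hKA : ConnectedSpace A.set := isConnected_iff_connectedSpace.1 A.2.1
  let f : I × A.set → Y := fun z => if (z.2 : Y) ∈ J then γ (σ z.1 * k z.2) else z.2
  have hfJ : ∀ z : I × A.set, (z.2 : Y) ∈ J → f z = γ (σ z.1 * k z.2) := fun z hz => if_pos hz
  have hfT : ∀ z : I × A.set, (z.2 : Y) ∈ T → f z = z.2 := by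
    intro z hz
    by_cases hzJ : (z.2 : Y) ∈ J
    · have hzv : (z.2 : Y) ∈ J ∩ T := ⟨hzJ, hz⟩
      rw [hJT, mem_singleton_iff] at hzv
      rw [hfJ z hzJ, hzv, hkγ, mul_zero]
    · exact if_neg hzJ
  have hf : Continuous f := by
    have hpre : Continuous fun z : I × A.set => (z.2 : Y) := by fun_prop
    rw [← continuousOn_univ, show (univ : Set (I × A.set)) = (fun z => (z.2 : Y)) ⁻¹' J ∪
      (fun z => (z.2 : Y)) ⁻¹' T from (eq_univ_of_forall fun z => (hA z.2.2).symm).symm]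
    refine ContinuousOn.union_of_isClosed ?_ ?_ (hJc.preimage hpre) (hT.preimage hpre)
    · refine ContinuousOn.congr ?_ fun z hz => hfJ z hz
      have : ContinuousOn (fun z : I × A.set => k z.2) ((fun z => (z.2 : Y)) ⁻¹' J) :=
        hk.comp hpre.continuousOn fun z hz => hz
      have hσ : Continuous fun z : I × A.set => σ z.1 := by fun_prop
      exact hγ.comp_continuousOn (hσ.continuousOn.mul this)
    · exact hpre.continuousOn.congr fun z hz => hfT z hz
  have hft : ∀ t, Continuous fun x => f (t, x) := fun t => by fun_prop
  let P : I → CP Y q := fun t => ⟨(⊤ : NonemptyCompacts A.set).map (fun x => f (t, x)) (hft t), by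
      simpa using isConnected_range (hft t), by
      simpa using ⟨q, A.mem_set, hfT (t, ⟨q, A.mem_set⟩) hqT⟩⟩
  have hP : ∀ t, (P t).set = range fun x => f (t, x) := fun t =>
    (NonemptyCompacts.coe_map _ _).trans (by simp)
  have hPc : Continuous P :=
    (Continuous.nonemptyCompacts_map' (f := fun _ : I => (⊤ : NonemptyCompacts A.set))
      (g := fun t x => f (t, x)) continuous_const hf).subtype_mk _
  refine ⟨P 1, ?_, ⟨⟨⟨P, hPc⟩, ?_, rfl⟩⟩⟩
  · rw [hP]
    rintro _ ⟨x, rfl⟩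
    by_cases hx : (x : Y) ∈ J
    · dsimp only
      rw [hfJ _ hx]
      have : γ 0 ∈ J ∩ T := hJT ▸ mem_singleton _
      simpa using this.2
    · have hxT : (x : Y) ∈ T := (hA x.2).resolve_right hx
      dsimp only
      rwa [hfT _ hxT]
  · refine CP.set_injective ?_
    change (P 0).set = _
    rw [hP]
    have : (fun x : A.set => f (0, x)) = Subtype.val := by
      ext x
      by_cases hx : (x : Y) ∈ J
      · rw [hfJ _ hx]
        simpa using hγk _ hx
      · exact hfT _ ((hA x.2).resolve_right hx)
    rw [this, Subtype.range_coe]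

theorem exists_isArcFromTo_of_union_arc {Y : Type u} [TopologicalSpace Y] [T2Space Y] {v w : Y}
    {T J : Set Y} (hT : ∀ a ∈ T, ∀ b ∈ T, a ≠ b → ∃ C ⊆ T, IsArcFromTo C a b)
    (hJ : IsArcFromTo J v w) (hJT : J ∩ T = {v}) :
    ∀ a ∈ T ∪ J, ∀ b ∈ T ∪ J, a ≠ b → ∃ C ⊆ T ∪ J, IsArcFromTo C a b := by
  have hvT : v ∈ T := (hJT ▸ mem_singleton v : v ∈ J ∩ T).2
  have key : ∀ a ∈ T, ∀ b ∈ J, a ≠ b → ∃ C ⊆ T ∪ J, IsArcFromTo C a b := by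
    intro a ha b hb hab
    rcases eq_or_ne a v with rfl | hav
    · obtain ⟨C, hC, hCab⟩ := hJ.exists_subarc hJ.left_mem hb hab
      exact ⟨C, hC.trans subset_union_right, hCab⟩
    rcases eq_or_ne v b with rfl | hvb
    · obtain ⟨C, hC, hCab⟩ := hT a ha v hvT hab
      exact ⟨C, hC.trans subset_union_left, hCab⟩
    obtain ⟨C, hC, hCav⟩ := hT a ha v hvT hav
    obtain ⟨D, hD, hDvb⟩ := hJ.exists_subarc hJ.left_mem hb hvb
    refine ⟨C ∪ D, union_subset_union hC hD, hCav.union hDvb (Subset.antisymm ?_ ?_)⟩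
    · rintro x ⟨hxC, hxD⟩
      rw [← hJT]
      exact ⟨hD hxD, hC hxC⟩
    · exact singleton_subset_iff.2 ⟨hCav.right_mem, hDvb.left_mem⟩
  rintro a (ha | ha) b (hb | hb) hab
  · obtain ⟨C, hC, hCab⟩ := hT a ha b hb hab
    exact ⟨C, hC.trans subset_union_left, hCab⟩
  · exact key a ha b hb hab
  · obtain ⟨C, hC, hCab⟩ := key b hb a ha hab.symm
    exact ⟨C, hC, hCab.symm⟩
  · obtain ⟨C, hC, hCab⟩ := hJ.exists_subarc ha hb hab
    exact ⟨C, hC.trans subset_union_right, hCab⟩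

/-- The closed sets `B i` meet pairwise only at `q`, and their union is arcwise connected and
every subcontinuum of it through `q` can be deformed to `{q}` in `C(q,Y)`. -/
structure IsArborescent {Y : Type u} [MetricSpace Y] {ι : Type*} (B : ι → Set Y) (q : Y) :
    Prop where
  isClosed : ∀ i, IsClosed (B i)
  mem : ∀ i, q ∈ B i
  inter_eq : ∀ i j, i ≠ j → B i ∩ B j = {q}
  joined : ∀ A : CP Y q, A.set ⊆ ⋃ i, B i → ∃ A' : CP Y q, A'.set = {q} ∧ Joined A A'
  exists_arc : ∀ a ∈ ⋃ i, B i, ∀ b ∈ ⋃ i, B i, a ≠ b → ∃ C ⊆ ⋃ i, B i, IsArcFromTo C a b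

theorem iUnion_update_union {α ι : Type*} [DecidableEq ι] (B : ι → Set α) (i : ι) (J : Set α) :
    ⋃ j, Function.update B i (B i ∪ J) j = (⋃ j, B j) ∪ J := by
  ext x
  simp only [mem_iUnion, mem_union]
  constructor
  · rintro ⟨j, hj⟩
    by_cases hji : j = i
    · subst hji
      rw [Function.update_self] at hj
      exact hj.imp_left fun h => ⟨j, h⟩
    · rw [Function.update_of_ne hji] at hj
      exact .inl ⟨j, hj⟩
  · rintro (⟨j, hj⟩ | hx)
    · by_cases hji : j = i
      · subst hji
        exact ⟨j, by rw [Function.update_self]; exact .inl hj⟩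
      · exact ⟨j, by rwa [Function.update_of_ne hji]⟩
    · exact ⟨i, by rw [Function.update_self]; exact .inr hx⟩

theorem IsArborescent.update {Y : Type u} [MetricSpace Y] {ι : Type*} [Finite ι] [DecidableEq ι]
    {B : ι → Set Y} {q v w : Y} {J : Set Y} (h : IsArborescent B q) (hJ : IsArcFromTo J v w)
    (hJB : J ∩ ⋃ i, B i = {v}) {i : ι} (hv : v ∈ B i) :
    IsArborescent (Function.update B i (B i ∪ J)) q := by
  have hsub : ∀ j, B j ⊆ Function.update B i (B i ∪ J) j := by
    intro j
    by_cases hji : j = i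
    · subst hji
      rw [Function.update_self]
      exact subset_union_left
    · rw [Function.update_of_ne hji]
  have hJi : ∀ j, j ≠ i → (B i ∪ J) ∩ B j = {q} := by
    intro j hji
    refine Subset.antisymm ?_ (singleton_subset_iff.2 ⟨.inl (h.mem i), h.mem j⟩)
    rw [← h.inter_eq j i hji]
    rintro x ⟨hx | hx, hxj⟩
    · exact ⟨hxj, hx⟩
    · have : x ∈ J ∩ ⋃ i, B i := ⟨hx, mem_iUnion.2 ⟨j, hxj⟩⟩
      rw [hJB, mem_singleton_iff] at this
      exact ⟨hxj, this ▸ hv⟩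
  constructor
  · intro j
    by_cases hji : j = i
    · subst hji
      rw [Function.update_self]
      exact (h.isClosed j).union hJ.isArcSet.isCompact.isClosed
    · rw [Function.update_of_ne hji]
      exact h.isClosed j
  · exact fun j => hsub j (h.mem j)
  · intro j k hjk
    by_cases hji : j = i
    · subst hji
      rw [Function.update_self, Function.update_of_ne hjk.symm, hJi k hjk.symm]
    · rw [Function.update_of_ne hji]
      by_cases hki : k = i
      · subst hki
        rw [Function.update_self, inter_comm, hJi j hji]
      · rw [Function.update_of_ne hki, h.inter_eq j k hjk]
  · intro A hA
    rw [iUnion_update_union] at hA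
    obtain ⟨A₁, hA₁, hAA₁⟩ := A.exists_joined_of_subset_union_arc
      (isClosed_iUnion_of_finite h.isClosed) (mem_iUnion.2 ⟨i, h.mem i⟩) hJ hJB hA
    obtain ⟨A₂, hA₂, hAA₂⟩ := h.joined A₁ hA₁
    exact ⟨A₂, hA₂, hAA₁.trans hAA₂⟩
  · rw [iUnion_update_union]
    exact exists_isArcFromTo_of_union_arc h.exists_arc hJ hJB

theorem IsTree.exists_isBranching {Y : Type u} [MetricSpace Y] (hY : IsTree Y) (q : Y) :
    ∃ (m : ℕ) (B : Fin m → Set Y), HasOrdIn univ q m ∧ IsBranching B q ∧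
      PathConnectedSpace (CP Y q) := by
  classical
  obtain ⟨⟨hcomp, hconn, -, 𝒜₀, harc₀, hcov₀, hend₀⟩, hacyc⟩ := hY
  obtain ⟨𝒜, harc, hcov, hend, hq⟩ := exists_arcs_isArcEndpoint harc₀ hcov₀ hend₀ q
  let ι := {J // J ∈ 𝒜.filter fun J => q ∈ J}
  have hι : ∀ i : ι, i.1 ∈ 𝒜 ∧ q ∈ i.1 := fun i => Finset.mem_filter.1 i.2
  let P : Finset (Set Y) → Prop := fun S => ∃ B : ι → Set Y, IsArborescent B q ∧
    (∀ i : ι, i.1 ∈ S → i.1 ⊆ B i) ∧ ⋃ i, B i = insert q (⋃₀ (S : Set (Set Y)))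
  obtain ⟨J₀, hJ₀, hqJ₀⟩ := mem_sUnion.1 (hcov ▸ mem_univ q)
  let i₀ : ι := ⟨J₀, Finset.mem_filter.2 ⟨hJ₀, hqJ₀⟩⟩
  have : Nonempty ι := ⟨i₀⟩
  have : Finite ι := inferInstanceAs (Finite (𝒜.filter fun J => q ∈ J))
  have hclosed : ∀ A ∈ 𝒜, IsClosed A := fun A hA => (harc A hA).isCompact.isClosed
  have hP0 : P ∅ := by
    refine ⟨fun _ => {q}, ⟨fun _ => isClosed_singleton, fun _ => rfl, fun _ _ _ => inter_self _,
      fun A hA => ?_, ?_⟩, by simp, by simp⟩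
    · rw [iUnion_const] at hA
      exact ⟨A, hA.antisymm (singleton_subset_iff.2 A.mem_set), .refl A⟩
    · simp only [iUnion_const, mem_singleton_iff]
      rintro a rfl b rfl hab
      exact absurd rfl hab
  have hstep : ∀ S ⊆ 𝒜, S ≠ 𝒜 → P S → ∃ J ∈ 𝒜, J ∉ S ∧ P (insert J S) := by
    rintro S hS hne ⟨B, hB, hSB, hBu⟩
    set T := ⋃ i, B i
    have hTc : IsClosed T := isClosed_iUnion_of_finite hB.isClosed
    have hqT : q ∈ T := hBu ▸ mem_insert _ _
    obtain ⟨J, hJ, hJS, v, hvJ, hvT⟩ : ∃ J ∈ 𝒜, J ∉ S ∧ (J ∩ T).Nonempty := by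
      let T' : Set Y := ⋃ J ∈ 𝒜 \ S, J
      have hT'c : IsClosed T' := isClosed_biUnion_finset fun J hJ =>
        hclosed J (Finset.mem_sdiff.1 hJ).1
      have hcov' : (univ : Set Y) ⊆ T ∪ T' := by
        intro x _
        obtain ⟨J, hJ, hx⟩ := mem_sUnion.1 (hcov ▸ mem_univ x)
        by_cases hJS : J ∈ S
        · left
          rw [hBu]
          exact .inr ⟨J, hJS, hx⟩
        · exact .inr (mem_iUnion₂.2 ⟨J, Finset.mem_sdiff.2 ⟨hJ, hJS⟩, hx⟩)
      obtain ⟨J₁, hJ₁, hJ₁S⟩ := Finset.exists_of_ssubset (hS.ssubset_of_ne hne)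
      obtain ⟨a, b, hab⟩ := (harc J₁ hJ₁).exists_isArcFromTo
      obtain ⟨x, -, hxT, hxT'⟩ := isPreconnected_closed_iff.1 isPreconnected_univ T T' hTc hT'c
        hcov' ⟨q, mem_univ q, hqT⟩
        ⟨a, mem_univ a, mem_iUnion₂.2 ⟨J₁, Finset.mem_sdiff.2 ⟨hJ₁, hJ₁S⟩, hab.left_mem⟩⟩
      obtain ⟨J, hJ, hxJ⟩ := mem_iUnion₂.1 hxT'
      exact ⟨J, (Finset.mem_sdiff.1 hJ).1, (Finset.mem_sdiff.1 hJ).2, x, hxJ, hxT⟩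
    have hJend : ∀ x ∈ J, x ∈ T → IsArcEndpoint J x := by
      intro x hxJ hxT
      rw [hBu] at hxT
      rcases hxT with rfl | ⟨A, hA, hxA⟩
      · exact hq J hJ hxJ
      · exact (hend J hJ A (hS hA) (fun h => hJS (h ▸ hA)) x ⟨hxJ, hxA⟩).1
    obtain ⟨w, hvw⟩ := hJend v hvJ hvT
    have hJT : J ∩ T = {v} := by
      refine Subset.antisymm ?_ (singleton_subset_iff.2 ⟨hvJ, hvT⟩)
      rintro x ⟨hxJ, hxT⟩
      by_contra hxv
      have hxw : x = w :=
        (hvw.eq_or_eq_of_isArcEndpoint (hJend x hxJ hxT)).resolve_left hxv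
      subst hxw
      obtain ⟨C, hCT, hC⟩ := hB.exists_arc x hxT v hvT hxv
      exact hacyc _ (hvw.isSimpleClosedCurve hC fun y hy =>
        hvw.eq_or_eq_of_isArcEndpoint (hJend y hy.1 (hCT hy.2)))
    obtain ⟨i, hvi, hi⟩ : ∃ i, v ∈ B i ∧ ∀ j : ι, j.1 = J → j = i := by
      by_cases hqJ : q ∈ J
      · have hqv : q ∈ J ∩ T := ⟨hqJ, hqT⟩
        rw [hJT, mem_singleton_iff] at hqv
        exact ⟨⟨J, Finset.mem_filter.2 ⟨hJ, hqJ⟩⟩, hqv ▸ hB.mem _, fun j hj => Subtype.ext hj⟩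
      · obtain ⟨i, hi⟩ := mem_iUnion.1 hvT
        exact ⟨i, hi, fun j hj => absurd (hj ▸ (hι j).2) hqJ⟩
    refine ⟨J, hJ, hJS, _, hB.update hvw hJT hvi, fun j hj => ?_, ?_⟩
    · by_cases hji : j = i
      · subst hji
        rw [Function.update_self]
        rcases Finset.mem_insert.1 hj with hj | hj
        · exact hj ▸ subset_union_right
        · exact (hSB j hj).trans subset_union_left
      · rw [Function.update_of_ne hji]
        exact hSB j ((Finset.mem_insert.1 hj).resolve_left fun h => hji (hi j h))
    · rw [iUnion_update_union, Finset.coe_insert, sUnion_insert]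
      change T ∪ J = _
      rw [hBu, insert_union, union_comm]
  have hPA : P 𝒜 := by
    obtain ⟨S, hS, hmax⟩ := (𝒜.powerset.filter P).exists_max_image Finset.card
      ⟨∅, Finset.mem_filter.2 ⟨Finset.empty_mem_powerset _, hP0⟩⟩
    rw [Finset.mem_filter, Finset.mem_powerset] at hS
    by_contra hPA
    obtain ⟨J, hJ, hJS, hPJ⟩ := hstep S hS.1 (fun h => hPA (h ▸ hS.2)) hS.2
    have := hmax (insert J S) (Finset.mem_filter.2
      ⟨Finset.mem_powerset.2 (Finset.insert_subset hJ hS.1), hPJ⟩)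
    rw [Finset.card_insert_of_notMem hJS] at this
    omega
  obtain ⟨B, hB, hιB, hBu⟩ := hPA
  have hBu' : ⋃ i, B i = univ := by
    rw [hBu, hcov, insert_eq_of_mem (mem_univ q)]
  let e := (Finite.equivFin ι).symm
  refine ⟨Nat.card ι, fun k => B (e k), ?_, ⟨fun k => hB.isClosed _, fun k => hB.mem _, ?_,
    fun j k hjk => hB.inter_eq _ _ (e.injective.ne hjk), fun k hk => ?_⟩, ?_⟩
  · refine ⟨⋃ k, (e k).1, subset_univ _, isClosed_iUnion_of_finite fun k => hclosed _ (hι _).1,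
      ⟨(⋃ J ∈ 𝒜.filter fun J => q ∉ J, J)ᶜ, ?_, ?_, ?_⟩, Nat.card_pos, fun k => (e k).1,
      fun k => harc _ (hι _).1, rfl, fun k => hq _ (hι _).1 (hι _).2, fun j k hjk => ?_⟩
    · exact (isClosed_biUnion_finset fun J hJ => hclosed J (Finset.mem_filter.1 hJ).1).isOpen_compl
    · intro hqU
      obtain ⟨J, hJ, hqJ⟩ := mem_iUnion₂.1 hqU
      exact (Finset.mem_filter.1 hJ).2 hqJ
    · rintro x ⟨hx, -⟩
      obtain ⟨J, hJ, hxJ⟩ := mem_sUnion.1 (hcov ▸ mem_univ x)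
      have hqJ : q ∈ J := by
        by_contra hqJ
        exact hx (mem_iUnion₂.2 ⟨J, Finset.mem_filter.2 ⟨hJ, hqJ⟩, hxJ⟩)
      obtain ⟨k, hk⟩ := e.surjective ⟨J, Finset.mem_filter.2 ⟨hJ, hqJ⟩⟩
      exact mem_iUnion.2 ⟨k, by rwa [hk]⟩
    · refine Subset.antisymm ?_ (singleton_subset_iff.2 ⟨(hι _).2, (hι _).2⟩)
      rw [← hB.inter_eq _ _ (e.injective.ne hjk)]
      exact inter_subset_inter (hιB _ (hι _).1) (hιB _ (hι _).1)
  · rw [e.surjective.iUnion_comp, hBu']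
  · obtain ⟨a, b, hab⟩ := (harc _ (hι (e k)).1).exists_isArcFromTo
    have hsub := hιB (e k) (hι _).1
    rw [hk] at hsub
    exact hab.ne ((hsub hab.left_mem).trans (hsub hab.right_mem).symm)
  · have hj : ∀ A : CP Y q, ∃ A' : CP Y q, A'.set = {q} ∧ Joined A A' := fun A =>
      hB.joined A (hBu' ▸ subset_univ _)
    let C₀ : CP Y q := ⟨{q}, by simpa using isConnected_singleton, by simp⟩
    refine ⟨⟨C₀⟩, fun A A' => ?_⟩
    obtain ⟨C, hC, hAC⟩ := hj A
    obtain ⟨C', hC', hAC'⟩ := hj A'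
    exact (CP.set_injective (hC.trans hC'.symm) ▸ hAC).trans hAC'.symm

theorem IsTree.ordIn_le {X Y : Type u} [MetricSpace X] [MetricSpace Y] (hX : IsTree X)
    (hY : IsTree Y) {p : X} {q : Y} (e : CP X p ≃ₜ CP Y q) :
    ordIn (univ : Set Y) q ≤ ordIn (univ : Set X) p := by
  obtain ⟨n, -, hn, -, -⟩ := hX.exists_isBranching p
  have hX' : HasOrdIn univ p (ordIn univ p) := Nat.sInf_mem (s := {n | HasOrdIn univ p n}) ⟨_, hn⟩
  obtain ⟨m, B, hm, hB, hpc⟩ := hY.exists_isBranching q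
  obtain ⟨hcomp, hconn, -⟩ := hY.1
  refine (Nat.sInf_le hm : ordIn univ q ≤ m).trans ?_
  obtain ⟨W, hW, hWne, φ, hφ, hφW⟩ := hX'.exists_continuous_injOn
  obtain ⟨g, hg, hgW, hgne⟩ := hB.exists_cube (hW.preimage e.symm.continuous)
    (hWne.preimage e.symm.surjective)
  by_contra! hlt
  obtain ⟨i, x, y, hx, hy, hxy⟩ := (hφ.comp (e.symm.continuous.comp hg)).exists_mem_faces_of_lt hlt
  exact hgne i x y hx hy (e.symm.injective (hφW (hgW x) (hgW y) hxy))

end PointedHyperspaces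

theorem statement7 {X Y : Type u} [MetricSpace X] [MetricSpace Y]
    (hX : IsTree X) (hY : IsTree Y) (p : X) (q : Y)
    (h : Nonempty (CP X p ≃ₜ CP Y q)) :
    ordIn (univ : Set X) p = ordIn (univ : Set Y) q := by
  obtain ⟨e⟩ := h
  exact (hY.ordIn_le hX e.symm).antisymm (hX.ordIn_le hY e)
end

section
/- If X is an arc and p ∈ X, then (X,p) has unique hyperspace C(p,X) in the class 𝒯 of trees; that is, for every tree Y and q ∈ Y such that C(p,X) is homeomorphic to C(q,Y), there is a homeomorphism 𝔥 : X → Y with 𝔥(p) = q. -/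
open Set Topology TopologicalSpace

universe u

section Dimension

/-- A continuous map into `ℂ` with constant exponential is constant. -/
theorem eq_of_exp_comp_eq {A : Type*} [TopologicalSpace A] [PreconnectedSpace A] {h : A → ℂ}
    (hc : Continuous h) (he : ∀ a b, Complex.exp (h a) = Complex.exp (h b)) (a b : A) :
    h a = h b := by
  refine Complex.isCoveringMap_exp.const_of_comp hc (fun a b => ?_) a b
  exact Subtype.ext (he a b)

/-- Every continuous nowhere vanishing function on the plane has a continuous logarithm. -/
theorem exists_continuous_log {g : ℝ × ℝ → ℂ} (hg : Continuous g) (h0 : ∀ x, g x ≠ 0) :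
    ∃ L : ℝ × ℝ → ℂ, Continuous L ∧ ∀ x, Complex.exp (L x) = g x := by
  obtain ⟨F, ⟨-, hF⟩, -⟩ := Complex.isCoveringMapOn_exp.existsUnique_continuousMap_lifts
    (⟨g, hg⟩ : C(ℝ × ℝ, ℂ)) (a₀ := (0, 0)) (Complex.exp_log (h0 _)) (fun a => h0 a)
  exact ⟨F, F.continuous, fun x => congrFun hF x⟩

/-- The parametrization of the unit sphere by longitude and latitude. -/
noncomputable def sphereParam (x : ℝ × ℝ) : Fin 3 → ℝ :=
  ![Real.cos x.1 * Real.cos x.2, Real.sin x.1 * Real.cos x.2, Real.sin x.2]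

theorem continuous_sphereParam : Continuous sphereParam := by
  refine continuous_pi fun i => ?_
  fin_cases i <;> simp [sphereParam] <;> fun_prop

theorem sphereParam_add_pi (a b : ℝ) :
    sphereParam (a + Real.pi, -b) = -sphereParam (a, b) := by
  ext i
  fin_cases i <;> simp [sphereParam]

theorem sphereParam_ne_neg (x : ℝ × ℝ) : sphereParam x ≠ -sphereParam x := by
  intro h
  have h0 := congrFun h 0
  have h1 := congrFun h 1
  have h2 := congrFun h 2
  simp only [sphereParam, Matrix.cons_val, Pi.neg_apply] at h0 h1 h2
  have h3 : Real.sin x.2 = 0 := by linarith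
  have h4 : Real.cos x.1 * Real.cos x.2 = 0 := by linarith
  have h5 : Real.sin x.1 * Real.cos x.2 = 0 := by linarith
  have h6 := Real.sin_sq_add_cos_sq x.2
  have h7 := Real.sin_sq_add_cos_sq x.1
  have h8 : Real.cos x.2 = 0 := by
    linear_combination (-Real.cos x.2) * h7 + Real.cos x.1 * h4 + Real.sin x.1 * h5
  rw [h3, h8] at h6
  norm_num at h6

theorem abs_sphereParam_le (x : ℝ × ℝ) (i : Fin 3) : |sphereParam x i| ≤ 1 := by
  fin_cases i
  · simpa [sphereParam, abs_mul] using
      mul_le_one₀ (Real.abs_cos_le_one _) (abs_nonneg _) (Real.abs_cos_le_one _)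
  · simpa [sphereParam, abs_mul] using
      mul_le_one₀ (Real.abs_sin_le_one _) (abs_nonneg _) (Real.abs_cos_le_one _)
  · simpa [sphereParam] using Real.abs_sin_le_one _

/-- The Borsuk–Ulam theorem for maps from the two-dimensional sphere to the plane. -/
theorem exists_eq_antipodal {f : (Fin 3 → ℝ) → ℂ} (hf : Continuous f) :
    ∃ x, f (sphereParam x) = f (-sphereParam x) := by
  by_contra! hne
  have hc := continuous_sphereParam
  obtain ⟨L, hL, hexp⟩ := exists_continuous_log
    (g := fun x => f (sphereParam x) - f (-sphereParam x)) (by fun_prop)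
    (fun x => sub_ne_zero.2 (hne x))
  have hneg : ∀ a b, Complex.exp (L (a + Real.pi, -b)) = -Complex.exp (L (a, b)) := by
    intro a b
    rw [hexp, hexp, sphereParam_add_pi]
    simp
  have hper : ∀ a b, Complex.exp (L (a + 2 * Real.pi, b)) = Complex.exp (L (a, b)) := by
    intro a b
    have := hneg (a + Real.pi) (-b)
    rw [hneg a b, neg_neg, neg_neg] at this
    rw [← this]
    ring_nf
  have hhalf := eq_of_exp_comp_eq (h := fun a : ℝ => L (a + Real.pi, 0) - L (a, 0))
    (by fun_prop) (fun a b => by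
      have ha := hneg a 0
      have hb := hneg b 0
      rw [neg_zero] at ha hb
      rw [Complex.exp_sub, Complex.exp_sub, ha, hb, neg_div, neg_div,
        div_self (Complex.exp_ne_zero _), div_self (Complex.exp_ne_zero _)]) 0 Real.pi
  have hturn := eq_of_exp_comp_eq (h := fun b : ℝ => L (0 + 2 * Real.pi, b) - L (0, b))
    (by fun_prop) (fun a b => by
      rw [Complex.exp_sub, Complex.exp_sub, hper, hper,
        div_self (Complex.exp_ne_zero _), div_self (Complex.exp_ne_zero _)]) 0 (Real.pi / 2)
  have hpole := eq_of_exp_comp_eq (h := fun a : ℝ => L (a, Real.pi / 2))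
    (by fun_prop) (fun a b => by
      rw [hexp, hexp]
      simp [sphereParam]) 0 (0 + 2 * Real.pi)
  have hstart := hneg 0 0
  simp only [zero_add, neg_zero, ← two_mul] at hhalf hturn hpole hstart
  have : L (Real.pi, 0) = L (0, 0) := by
    linear_combination (1 / 2) * hhalf + (1 / 2) * hturn - (1 / 2) * hpole
  rw [this] at hstart
  exact Complex.exp_ne_zero _ (by linear_combination (1 / 2) * hstart)

/-- The retraction of the real line onto the unit interval, rescaled so that it is injective
on `[-1, 1]`. -/
noncomputable def toUnit (x : ℝ) : ↥(Icc (0 : ℝ) 1) := projIcc 0 1 zero_le_one ((1 + x) / 2)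

theorem continuous_toUnit : Continuous toUnit :=
  continuous_projIcc.comp (by fun_prop)

theorem toUnit_inj {x y : ℝ} (hx : |x| ≤ 1) (hy : |y| ≤ 1) (h : toUnit x = toUnit y) :
    x = y := by
  rw [abs_le] at hx hy
  have hx' : (1 + x) / 2 ∈ Icc (0 : ℝ) 1 := by constructor <;> linarith
  have hy' : (1 + y) / 2 ∈ Icc (0 : ℝ) 1 := by constructor <;> linarith
  have := (strictMonoOn_projIcc (zero_le_one (α := ℝ))).injOn hx' hy' h
  linarith

theorem not_injective_cube_square (f : (Fin 3 → ↥(Icc (0 : ℝ) 1)) → Fin 2 → ↥(Icc (0 : ℝ) 1))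
    (hf : Continuous f) : ¬ Function.Injective f := by
  intro hinj
  have ht := continuous_toUnit
  obtain ⟨x, hx⟩ := exists_eq_antipodal
    (f := fun u => ⟨f (fun i => toUnit (u i)) 0, f (fun i => toUnit (u i)) 1⟩) (by
      have : Continuous fun u : Fin 3 → ℝ => f (fun i => toUnit (u i)) := by fun_prop
      exact Complex.equivRealProdCLM.symm.continuous.comp
        (f := fun u : Fin 3 → ℝ =>
          ((f (fun i => toUnit (u i)) 0 : ℝ), (f (fun i => toUnit (u i)) 1 : ℝ)))
        (by fun_prop))
  rw [Complex.ext_iff] at hx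
  have h2 : f (fun i => toUnit (sphereParam x i)) = f (fun i => toUnit ((-sphereParam x) i)) := by
    ext i
    fin_cases i
    exacts [hx.1, hx.2]
  refine sphereParam_ne_neg x (funext fun i => toUnit_inj (abs_sphereParam_le x i) ?_
    (congrFun (hinj h2) i))
  rw [Pi.neg_apply, abs_neg]
  exact abs_sphereParam_le x i

theorem not_injective_square_real (f : (Fin 2 → ↥(Icc (0 : ℝ) 1)) → ℝ) (hf : Continuous f) :
    ¬ Function.Injective f := by
  intro hinj
  have ht := continuous_toUnit
  let u : ℝ → Fin 2 → ℝ := fun θ => ![Real.cos θ, Real.sin θ]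
  have hu : Continuous u := by
    refine continuous_pi fun i => ?_
    fin_cases i <;> simp [u] <;> fun_prop
  have hule : ∀ θ i, |u θ i| ≤ 1 := by
    intro θ i
    fin_cases i
    exacts [Real.abs_cos_le_one _, Real.abs_sin_le_one _]
  have hneg : ∀ θ, u (θ + Real.pi) = -u θ := by
    intro θ
    ext i
    fin_cases i <;> simp [u]
  let F : (Fin 2 → ℝ) → ℝ := fun v => f fun i => toUnit (v i)
  have hF : Continuous F := by fun_prop
  have hc : Continuous fun θ => F (u θ) - F (-u θ) := by fun_prop
  obtain ⟨θ, hθ⟩ : ∃ θ, F (u θ) - F (-u θ) = 0 := by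
    have hpi : F (u Real.pi) - F (-u Real.pi) = -(F (u 0) - F (-u 0)) := by
      have := hneg 0
      rw [zero_add] at this
      rw [this, neg_neg]
      ring
    rcases le_total (F (u 0) - F (-u 0)) 0 with h | h
    · exact mem_range_of_exists_le_of_exists_ge hc ⟨0, h⟩ ⟨Real.pi, by rw [hpi]; linarith⟩
    · exact mem_range_of_exists_le_of_exists_ge hc ⟨Real.pi, by rw [hpi]; linarith⟩ ⟨0, h⟩
  have heq : u θ = -u θ := funext fun i =>
    toUnit_inj (hule θ i) (by rw [Pi.neg_apply, abs_neg]; exact hule θ i)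
      (congrFun (hinj (sub_eq_zero.1 hθ)) i)
  have h0 : Real.cos θ = -Real.cos θ := congrFun heq 0
  have h1 : Real.sin θ = -Real.sin θ := congrFun heq 1
  have h2 := Real.sin_sq_add_cos_sq θ
  nlinarith

/-- No nonempty open subset of the square injects continuously into the line. -/
theorem not_injOn_open_square {W : Set (Fin 2 → ↥(Icc (0 : ℝ) 1))} (hW : IsOpen W)
    (hne : W.Nonempty) (f : (Fin 2 → ↥(Icc (0 : ℝ) 1)) → ℝ) (hf : ContinuousOn f W) :
    ¬ InjOn f W := by
  intro hinj
  obtain ⟨x, hx⟩ := hne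
  obtain ⟨ε, hε, hball⟩ := Metric.isOpen_iff.1 hW x hx
  obtain ⟨δ, hδ, hδ1, hδε⟩ : ∃ δ : ℝ, 0 < δ ∧ δ ≤ 1 ∧ δ < ε :=
    ⟨min 1 (ε / 2), by positivity, min_le_left _ _, (min_le_right _ _).trans_lt (by linarith)⟩
  let g : (Fin 2 → ↥(Icc (0 : ℝ) 1)) → Fin 2 → ↥(Icc (0 : ℝ) 1) := fun y i =>
    ⟨(1 - δ) * x i + δ * y i, by
      have h1 := (x i).2
      have h2 := (y i).2
      constructor <;> nlinarith [h1.1, h1.2, h2.1, h2.2]⟩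
  have hg : Continuous g := by fun_prop
  have hgW : ∀ y, g y ∈ W := by
    refine fun y => hball ?_
    rw [Metric.mem_ball, dist_pi_lt_iff hε]
    intro i
    refine lt_of_le_of_lt ?_ hδε
    rw [Subtype.dist_eq, Real.dist_eq, abs_le]
    have h1 := (x i).2
    have h2 := (y i).2
    constructor <;> simp only [g] <;> nlinarith [h1.1, h1.2, h2.1, h2.2]
  refine not_injective_square_real (fun y => f (g y)) (hf.comp_continuous hg hgW) ?_
  intro y z hyz
  have := hinj (hgW y) (hgW z) hyz
  ext i
  have hi : (1 - δ) * (x i : ℝ) + δ * y i = (1 - δ) * x i + δ * z i :=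
    congrArg Subtype.val (congrFun this i)
  exact mul_left_cancel₀ hδ.ne' (by linarith)

end Dimension

section Arcs

variable {Y : Type u} [MetricSpace Y]

/-- `γ` parametrizes the arc `B` by the interval `[c, d]`. -/
structure IsArcParam (γ : ℝ → Y) (c d : ℝ) (B : Set Y) : Prop where
  lt : c < d
  cont : ContinuousOn γ (Icc c d)
  inj : InjOn γ (Icc c d)
  image : γ '' Icc c d = B

namespace IsArcParam

variable {γ η : ℝ → Y} {c d e : ℝ} {B E : Set Y}

theorem mem (h : IsArcParam γ c d B) {t : ℝ} (ht : t ∈ Icc c d) : γ t ∈ B :=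
  h.image ▸ mem_image_of_mem γ ht

theorem left_mem (h : IsArcParam γ c d B) : γ c ∈ B := h.mem (left_mem_Icc.2 h.lt.le)

theorem right_mem (h : IsArcParam γ c d B) : γ d ∈ B := h.mem (right_mem_Icc.2 h.lt.le)

theorem exists_eq (h : IsArcParam γ c d B) {x : Y} (hx : x ∈ B) : ∃ t ∈ Icc c d, γ t = x := by
  rw [← h.image] at hx
  exact hx

theorem comp (h : IsArcParam γ c d B) {φ : ℝ → ℝ} {c' d' : ℝ} (hlt : c' < d')
    (hφ : ContinuousOn φ (Icc c' d')) (hinj : InjOn φ (Icc c' d'))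
    (him : φ '' Icc c' d' = Icc c d) : IsArcParam (γ ∘ φ) c' d' B where
  lt := hlt
  cont := h.cont.comp hφ (mapsTo_iff_image_subset.2 him.subset)
  inj := h.inj.comp hinj (mapsTo_iff_image_subset.2 him.subset)
  image := by rw [image_comp, him, h.image]

theorem reverse (h : IsArcParam γ c d B) : IsArcParam (fun t => γ (-t)) (-d) (-c) B :=
  h.comp (φ := fun t => -t) (neg_lt_neg h.lt) continuousOn_id.neg neg_injective.injOn (by simp)

theorem affine (h : IsArcParam γ c d B) {k m c' d' : ℝ} (hk : 0 < k) (hc : k * c' + m = c)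
    (hd : k * d' + m = d) : IsArcParam (fun t => γ (k * t + m)) c' d' B := by
  refine h.comp (φ := fun t => k * t + m) ?_ (by fun_prop) ?_ ?_
  · have := h.lt
    rw [← hc, ← hd] at this
    exact lt_of_mul_lt_mul_left (by linarith) hk.le
  · intro x _ y _ hxy
    exact mul_left_cancel₀ hk.ne' (add_right_cancel hxy)
  · rw [image_affine_Icc' hk, hc, hd]

theorem restrict (h : IsArcParam γ c d B) {a b : ℝ} (hca : c ≤ a) (hab : a < b) (hbd : b ≤ d) :
    IsArcParam γ a b (γ '' Icc a b) where
  lt := hab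
  cont := h.cont.mono (Icc_subset_Icc hca hbd)
  inj := h.inj.mono (Icc_subset_Icc hca hbd)
  image := rfl

theorem exists_homeomorph (h : IsArcParam γ c d B) :
    ∃ f : ↥(Icc c d) ≃ₜ ↥B, ∀ t, (f t : Y) = γ t := by
  let f : ↥(Icc c d) → ↥B := fun t => ⟨γ t, h.mem t.2⟩
  have hf : Continuous f :=
    (continuousOn_iff_continuous_domRestrict.1 h.cont).subtype_mk _
  have hbij : Function.Bijective f := by
    refine ⟨fun s t hst => Subtype.ext (h.inj s.2 t.2 (congrArg Subtype.val hst)), fun y => ?_⟩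
    obtain ⟨t, ht, hty⟩ := h.exists_eq y.2
    exact ⟨⟨t, ht⟩, Subtype.ext hty⟩
  exact ⟨Continuous.homeoOfEquivCompactToT2 (f := Equiv.ofBijective f hbij) hf, fun t => rfl⟩

theorem isArcSet (h : IsArcParam γ c d B) : IsArcSet B :=
  let ⟨f, _⟩ := h.exists_homeomorph
  ⟨f.symm.trans (iccHomeoI c d h.lt)⟩

theorem isArcEndpoint_left (h : IsArcParam γ c d B) : IsArcEndpoint B (γ c) := by
  obtain ⟨f, hf⟩ := h.exists_homeomorph
  refine ⟨_, (iccHomeoI c d h.lt).symm.trans f, ?_, rfl⟩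
  simp [hf]

theorem isArcEndpoint_right (h : IsArcParam γ c d B) : IsArcEndpoint B (γ d) := by
  simpa using h.reverse.isArcEndpoint_left

theorem exists_eq_image_Icc (h : IsArcParam γ c d B) {K : Set Y} (hK : IsCompact K)
    (hconn : IsConnected K) (hKB : K ⊆ B) :
    ∃ a b, c ≤ a ∧ a ≤ b ∧ b ≤ d ∧ K = γ '' Icc a b := by
  obtain ⟨f, hf⟩ := h.exists_homeomorph
  let g : ↥B → ℝ := fun y => f.symm y
  have hg : Continuous g := by fun_prop
  have hγg : ∀ y, γ (g y) = y := fun y => by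
    rw [← hf, f.apply_symm_apply]
  have hKc : IsConnected ((↑) ⁻¹' K : Set ↥B) := by
    refine ⟨?_, ?_⟩
    · obtain ⟨x, hx⟩ := hconn.nonempty
      exact ⟨⟨x, hKB hx⟩, hx⟩
    · rw [← IsInducing.subtypeVal.isPreconnected_image, Subtype.image_preimage_coe,
        inter_eq_right.2 hKB]
      exact hconn.isPreconnected
  have hKk : IsCompact ((↑) ⁻¹' K : Set ↥B) := by
    rw [Subtype.isCompact_iff, Subtype.image_preimage_coe, inter_eq_right.2 hKB]
    exact hK
  have hI := eq_Icc_of_connected_compact (hKc.image g hg.continuousOn) (hKk.image hg)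
  set a := sInf (g '' ((↑) ⁻¹' K))
  set b := sSup (g '' ((↑) ⁻¹' K))
  have hab : a ≤ b := by
    rw [← nonempty_Icc, ← hI]
    exact (hKc.image g hg.continuousOn).nonempty
  have hsub : Icc a b ⊆ Icc c d := by
    rw [← hI]
    rintro _ ⟨y, -, rfl⟩
    exact (f.symm y).2
  refine ⟨a, b, (hsub (left_mem_Icc.2 hab)).1, hab, (hsub (right_mem_Icc.2 hab)).2, ?_⟩
  rw [← hI, image_image]
  ext y
  simp only [hγg, Subtype.image_preimage_coe]
  exact ⟨fun hy => ⟨hKB hy, hy⟩, fun hy => hy.2⟩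

theorem eq_or_eq_of_isArcEndpoint (h : IsArcParam γ c d B) {x : Y} (hx : IsArcEndpoint B x) :
    x = γ c ∨ x = γ d := by
  obtain ⟨y, f, hfx, -⟩ := hx
  obtain ⟨g, hg⟩ := h.exists_homeomorph
  obtain ⟨m, hm⟩ : ∃ m, g m = f ⟨0, by norm_num⟩ := g.surjective _
  have hmx : γ m = x := by rw [← hg, hm, hfx]
  by_contra! hne
  have hcm : c ≠ m := fun h' => hne.1 (hmx.symm.trans (congrArg γ h'.symm))
  have hdm : d ≠ m := fun h' => hne.2 (hmx.symm.trans (congrArg γ h'.symm))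
  let ψ : ℝ → ℝ := fun t => g.symm (f (projIcc 0 1 zero_le_one t))
  have hψ : Continuous ψ := by
    have : Continuous (projIcc (0 : ℝ) 1 zero_le_one) := continuous_projIcc
    fun_prop
  have hpre := (isPreconnected_Ioc (a := (0 : ℝ)) (b := 1)).image ψ hψ.continuousOn
  have hsurj : ∀ s : ↥(Icc c d), (s : ℝ) ≠ m → (s : ℝ) ∈ ψ '' Ioc 0 1 := by
    intro s hs
    refine ⟨f.symm (g s), ⟨?_, (f.symm (g s)).2.2⟩, by simp [ψ]⟩
    refine lt_of_le_of_ne (f.symm (g s)).2.1 fun h0 => hs ?_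
    have : f.symm (g s) = ⟨0, by norm_num⟩ := Subtype.ext h0.symm
    rw [f.symm_apply_eq, ← hm] at this
    rw [g.injective this]
  obtain ⟨t, ht, htm⟩ := hpre.ordConnected.out (hsurj ⟨c, left_mem_Icc.2 h.lt.le⟩ hcm)
    (hsurj ⟨d, right_mem_Icc.2 h.lt.le⟩ hdm) m.2
  have : g.symm (f (projIcc 0 1 zero_le_one t)) = m := Subtype.ext htm
  rw [g.symm_apply_eq, hm] at this
  have h0 := congrArg Subtype.val (f.injective this)
  rw [projIcc_of_mem _ (Ioc_subset_Icc_self ht)] at h0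
  exact ht.1.ne' h0

theorem arcInterior_eq (h : IsArcParam γ c d B) : arcInterior B = γ '' Ioo c d := by
  ext x
  constructor
  · rintro ⟨hxB, hx⟩
    obtain ⟨t, ht, rfl⟩ := h.exists_eq hxB
    refine ⟨t, ⟨lt_of_le_of_ne ht.1 ?_, lt_of_le_of_ne ht.2 ?_⟩, rfl⟩
    · rintro rfl
      exact hx h.isArcEndpoint_left
    · rintro rfl
      exact hx h.isArcEndpoint_right
  · rintro ⟨t, ht, rfl⟩
    refine ⟨h.mem (Ioo_subset_Icc_self ht), fun hx => ?_⟩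
    rcases h.eq_or_eq_of_isArcEndpoint hx with heq | heq
    · exact ht.1.ne' (h.inj (Ioo_subset_Icc_self ht) (left_mem_Icc.2 h.lt.le) heq)
    · exact ht.2.ne (h.inj (Ioo_subset_Icc_self ht) (right_mem_Icc.2 h.lt.le) heq)

/-- The concatenation of two maps defined on consecutive intervals. -/
theorem continuousOn_ite (h : IsArcParam γ c d B) (h' : IsArcParam η d e E) (hd : γ d = η d) :
    ContinuousOn (fun t => if t ≤ d then γ t else η t) (Icc c e) := by
  rw [← Icc_union_Icc_eq_Icc h.lt.le h'.lt.le]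
  refine ContinuousOn.union_of_isClosed ?_ ?_ isClosed_Icc isClosed_Icc
  · exact h.cont.congr fun t ht => if_pos ht.2
  · refine h'.cont.congr fun t ht => ?_
    split_ifs with htd
    · rw [le_antisymm htd ht.1, hd]
    · rfl

theorem image_ite (h : IsArcParam γ c d B) (h' : IsArcParam η d e E) (hd : γ d = η d) :
    (fun t => if t ≤ d then γ t else η t) '' Icc c e = B ∪ E := by
  rw [← Icc_union_Icc_eq_Icc h.lt.le h'.lt.le, image_union, ← h.image, ← h'.image]
  congr 1
  · exact image_congr fun t ht => if_pos ht.2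
  · refine image_congr fun t ht => ?_
    split_ifs with htd
    · rw [le_antisymm htd ht.1, hd]
    · rfl

theorem isArcSet_union (h : IsArcParam γ c d B) (h' : IsArcParam η d e E) (hd : γ d = η d)
    (hBE : B ∩ E ⊆ {γ d}) : IsArcSet (B ∪ E) := by
  have key : ∀ s ∈ Icc c d, ∀ t ∈ Icc d e, d < t → γ s ≠ η t := by
    intro s hs t ht hdt hst
    have : η t = γ d := hBE ⟨hst ▸ h.mem hs, h'.mem ht⟩
    exact hdt.ne' (h'.inj ht (left_mem_Icc.2 h'.lt.le) (this.trans hd))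
  have : IsArcParam (fun t => if t ≤ d then γ t else η t) c e (B ∪ E) := by
    refine ⟨h.lt.trans h'.lt, h.continuousOn_ite h' hd, ?_, h.image_ite h' hd⟩
    intro s hs t ht hst
    dsimp only at hst
    split_ifs at hst with h1 h2 h2
    · exact h.inj ⟨hs.1, h1⟩ ⟨ht.1, h2⟩ hst
    · exact absurd hst (key _ ⟨hs.1, h1⟩ _ ⟨(not_le.1 h2).le, ht.2⟩ (not_le.1 h2))
    · exact absurd hst.symm (key _ ⟨ht.1, h2⟩ _ ⟨(not_le.1 h1).le, hs.2⟩ (not_le.1 h1))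
    · exact h'.inj ⟨(not_le.1 h1).le, hs.2⟩ ⟨(not_le.1 h2).le, ht.2⟩ hst
  exact this.isArcSet

theorem exists_isSimpleClosedCurve (h : IsArcParam γ c d B) (h' : IsArcParam η d e E)
    (hd : γ d = η d) (hce : γ c = η e) (hBE : B ∩ E ⊆ {γ c, γ d}) :
    ∃ S : Set Y, IsSimpleClosedCurve S := by
  have key : ∀ s ∈ Icc c d, ∀ t ∈ Icc d e, d < t → t < e → γ s ≠ η t := by
    intro s hs t ht hdt hte hst
    rcases hBE ⟨hst ▸ h.mem hs, h'.mem ht⟩ with h1 | h1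
    · exact hte.ne (h'.inj ht (right_mem_Icc.2 h'.lt.le) (h1.trans hce))
    · exact hdt.ne' (h'.inj ht (left_mem_Icc.2 h'.lt.le) (Eq.trans h1 hd))
  let δ : ℝ → Y := fun t => if t ≤ d then γ t else η t
  have hinj : InjOn δ (Ico c e) := by
    intro s hs t ht hst
    simp only [δ] at hst
    split_ifs at hst with h1 h2 h2
    · exact h.inj ⟨hs.1, h1⟩ ⟨ht.1, h2⟩ hst
    · exact absurd hst (key _ ⟨hs.1, h1⟩ _ ⟨(not_le.1 h2).le, ht.2.le⟩ (not_le.1 h2) ht.2)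
    · exact absurd hst.symm (key _ ⟨ht.1, h2⟩ _ ⟨(not_le.1 h1).le, hs.2.le⟩ (not_le.1 h1) hs.2)
    · exact h'.inj ⟨(not_le.1 h1).le, hs.2.le⟩ ⟨(not_le.1 h2).le, ht.2.le⟩ hst
  have hpos : 0 < e - c := sub_pos.2 (h.lt.trans h'.lt)
  have hadd : c + (e - c) = e := by ring
  have : Fact (0 < e - c) := ⟨hpos⟩
  let F : AddCircle (e - c) → Y := AddCircle.liftIco (e - c) c δ
  have hF : Continuous F := by
    refine AddCircle.liftIco_continuous ?_ ?_
    · rw [hadd]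
      simp [δ, h.lt.le, h'.lt, hce]
    · rw [hadd]
      exact h.continuousOn_ite h' hd
  have hFinj : Function.Injective F := by
    intro x y hxy
    obtain ⟨s, hs, rfl⟩ : x ∈ ((↑) : ℝ → AddCircle (e - c)) '' Ico c (c + (e - c)) := by
      rw [AddCircle.coe_image_Ico_eq]
      trivial
    obtain ⟨t, ht, rfl⟩ : y ∈ ((↑) : ℝ → AddCircle (e - c)) '' Ico c (c + (e - c)) := by
      rw [AddCircle.coe_image_Ico_eq]
      trivial
    simp only [F, AddCircle.liftIco_coe_apply hs, AddCircle.liftIco_coe_apply ht] at hxy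
    rw [hadd] at hs ht
    rw [hinj hs ht hxy]
  exact ⟨range F, ⟨(hF.isClosedEmbedding hFinj).isEmbedding.toHomeomorph.symm.trans
    (AddCircle.homeomorphCircle hpos.ne')⟩⟩

/-- Two spaces parametrized by the same interval are homeomorphic. -/
theorem exists_homeomorph_of_univ {X : Type u} [MetricSpace X] {δ : ℝ → X}
    (h : IsArcParam δ c d univ) (h' : IsArcParam γ c d univ) {t : ℝ} (ht : t ∈ Icc c d) :
    ∃ f : X ≃ₜ Y, f (δ t) = γ t := by
  obtain ⟨f, hf⟩ := h.exists_homeomorph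
  obtain ⟨g, hg⟩ := h'.exists_homeomorph
  refine ⟨(Homeomorph.Set.univ X).symm.trans
    ((f.symm.trans g).trans (Homeomorph.Set.univ Y)), ?_⟩
  have : f.symm ⟨δ t, mem_univ _⟩ = ⟨t, ht⟩ := by
    rw [f.symm_apply_eq]
    exact Subtype.ext (hf ⟨t, ht⟩).symm
  calc ((g (f.symm ⟨δ t, mem_univ _⟩) : ↥(univ : Set Y)) : Y) = γ t := by rw [this, hg]

end IsArcParam

theorem IsArcFromTo.exists_isArcParam {B : Set Y} {a b : Y} (h : IsArcFromTo B a b) :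
    ∃ γ : ℝ → Y, IsArcParam γ 0 1 B ∧ γ 0 = a ∧ γ 1 = b := by
  obtain ⟨f, rfl, rfl⟩ := h
  refine ⟨fun t => f (projIcc 0 1 zero_le_one t), ⟨zero_lt_one, ?_, ?_, ?_⟩, ?_, ?_⟩
  · have : Continuous (projIcc (0 : ℝ) 1 zero_le_one) := continuous_projIcc
    fun_prop
  · intro s hs t ht hst
    exact (strictMonoOn_projIcc zero_le_one).injOn hs ht (f.injective (Subtype.ext hst))
  · ext y
    constructor
    · rintro ⟨t, -, rfl⟩
      exact Subtype.coe_prop _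
    · intro hy
      refine ⟨f.symm ⟨y, hy⟩, (f.symm ⟨y, hy⟩).2, ?_⟩
      simp
  · exact congrArg (fun s => (f s : Y)) (projIcc_left _)
  · exact congrArg (fun s => (f s : Y)) (projIcc_right _)

theorem IsArcSet.exists_isArcParam {B : Set Y} (h : IsArcSet B) :
    ∃ γ : ℝ → Y, IsArcParam γ 0 1 B := by
  obtain ⟨f⟩ := h
  obtain ⟨γ, hγ, -⟩ := IsArcFromTo.exists_isArcParam ⟨f.symm, rfl, rfl⟩
  exact ⟨γ, hγ⟩

theorem IsArcEndpoint.exists_isArcParam {B : Set Y} {a : Y} (h : IsArcEndpoint B a) :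
    ∃ γ : ℝ → Y, IsArcParam γ 0 1 B ∧ γ 0 = a := by
  obtain ⟨b, hb⟩ := h
  obtain ⟨γ, hγ, ha, -⟩ := hb.exists_isArcParam
  exact ⟨γ, hγ, ha⟩

/-- An interior point of an arc can be taken as the origin of a parametrization by `[-1, 1]`. -/
theorem exists_isArcParam_of_mem_arcInterior {B : Set Y} (hB : IsArcSet B) {q : Y}
    (hq : q ∈ arcInterior B) : ∃ γ : ℝ → Y, IsArcParam γ (-1) 1 B ∧ γ 0 = q := by
  obtain ⟨γ, hγ⟩ := hB.exists_isArcParam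
  rw [hγ.arcInterior_eq] at hq
  obtain ⟨k, ⟨hk0, hk1⟩, rfl⟩ := hq
  let φ : ℝ → ℝ := fun t => k + k * min t 0 + (1 - k) * max t 0
  have hφc : Continuous φ := by fun_prop
  have hφ : StrictMono φ := by
    intro s t hst
    simp only [φ]
    rcases le_total t 0 with ht | ht
    · rw [min_eq_left ht, min_eq_left (hst.le.trans ht), max_eq_right ht,
        max_eq_right (hst.le.trans ht)]
      nlinarith
    · rw [min_eq_right ht, max_eq_left ht]
      rcases le_total s 0 with hs | hs
      · rw [min_eq_left hs, max_eq_right hs]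
        rcases hs.lt_or_eq with h | h <;> nlinarith
      · rw [min_eq_right hs, max_eq_left hs]
        nlinarith
  have h1 : φ (-1) = 0 := by norm_num [φ]
  have h2 : φ 1 = 1 := by norm_num [φ]
  refine ⟨γ ∘ φ, hγ.comp (by norm_num) hφc.continuousOn hφ.injective.injOn ?_, by simp [φ]⟩
  refine Subset.antisymm ?_ ?_
  · rintro _ ⟨t, ht, rfl⟩
    exact ⟨h1 ▸ hφ.monotone ht.1, h2 ▸ hφ.monotone ht.2⟩
  · have := intermediate_value_Icc (show (-1 : ℝ) ≤ 1 by norm_num) hφc.continuousOn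
    rwa [h1, h2] at this

end Arcs

section Whiskers

variable {Y : Type u} [MetricSpace Y]

/-- The element of `C(q,Y)` given by a subcontinuum containing `q`. -/
def CP.ofSet {q : Y} (A : Set Y) (hc : IsCompact A) (hconn : IsConnected A) (hq : q ∈ A) :
    CP Y q :=
  ⟨⟨⟨A, hc⟩, hconn.nonempty⟩, hconn, hq⟩

theorem CP.set_injective_s8 {q : Y} : Function.Injective (CP.set : CP Y q → Set Y) :=
  fun _ _ h => Subtype.ext (NonemptyCompacts.ext h)

theorem CP.dist_eq {q : Y} (A B : CP Y q) : dist A B = Metric.hausdorffDist A.set B.set := rfl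

theorem CP.isOpen_subset {q : Y} {U : Set Y} (hU : IsOpen U) :
    IsOpen {K : CP Y q | K.set ⊆ U} :=
  (NonemptyCompacts.isOpen_subsets_of_isOpen hU).preimage
    (continuous_subtype_val (p := fun A : NonemptyCompacts Y =>
      IsConnected (A : Set Y) ∧ q ∈ (A : Set Y)))

/-- The arcs `α i` are attached at their initial points to the continuum `A` containing `q`, and
are otherwise disjoint from it and from each other. -/
structure IsWhiskers (q : Y) (A : Set Y) {n : ℕ} (α : Fin n → ℝ → Y) : Prop where
  isCompact : IsCompact A
  isConnected : IsConnected A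
  mem : q ∈ A
  cont : ∀ i, ContinuousOn (α i) (Icc 0 1)
  inj : ∀ i, InjOn (α i) (Icc 0 1)
  start : ∀ i, α i 0 ∈ A
  notMem : ∀ i, ∀ t ∈ Ioc (0 : ℝ) 1, α i t ∉ A
  ne : ∀ i j, i < j → ∀ s ∈ Ioc (0 : ℝ) 1, ∀ t ∈ Ioc (0 : ℝ) 1, α i s ≠ α j t

/-- The union of `A` with initial subarcs of its whiskers. -/
def whiskerSet (A : Set Y) {n : ℕ} (α : Fin n → ℝ → Y) (s : Fin n → ↥(Icc (0 : ℝ) 1)) : Set Y :=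
  A ∪ ⋃ i, α i '' Icc 0 (s i)

namespace IsWhiskers

variable {q : Y} {A : Set Y} {n : ℕ} {α : Fin n → ℝ → Y}

theorem isCompact_whiskerSet (h : IsWhiskers q A α) (s : Fin n → ↥(Icc (0 : ℝ) 1)) :
    IsCompact (whiskerSet A α s) :=
  h.isCompact.union (isCompact_iUnion fun i =>
    isCompact_Icc.image_of_continuousOn ((h.cont i).mono (Icc_subset_Icc_right (s i).2.2)))

theorem isConnected_whiskerSet (h : IsWhiskers q A α) (s : Fin n → ↥(Icc (0 : ℝ) 1)) :
    IsConnected (whiskerSet A α s) := by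
  refine ⟨h.isConnected.nonempty.mono subset_union_left, ?_⟩
  have heq : whiskerSet A α s = ⋃₀ insert A (range fun i => A ∪ α i '' Icc 0 (s i)) := by
    rw [sUnion_insert, sUnion_range, whiskerSet]
    ext x
    simp only [mem_union, mem_iUnion]
    constructor
    · rintro (hx | ⟨i, hx⟩)
      exacts [Or.inl hx, Or.inr ⟨i, Or.inr hx⟩]
    · rintro (hx | ⟨i, hx | hx⟩)
      exacts [Or.inl hx, Or.inl hx, Or.inr ⟨i, hx⟩]
  rw [heq]
  refine isPreconnected_sUnion q _ ?_ ?_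
  · rintro B (rfl | ⟨i, rfl⟩)
    exacts [h.mem, Or.inl h.mem]
  · rintro B (rfl | ⟨i, rfl⟩)
    · exact h.isConnected.isPreconnected
    · exact h.isConnected.isPreconnected.union (α i 0) (h.start i)
        (mem_image_of_mem _ (left_mem_Icc.2 (s i).2.1))
        (isPreconnected_Icc.image _ ((h.cont i).mono (Icc_subset_Icc_right (s i).2.2)))

/-- The map from the cube to `C(q,Y)` associated with a family of whiskers. -/
def toCP (h : IsWhiskers q A α) (s : Fin n → ↥(Icc (0 : ℝ) 1)) : CP Y q :=
  CP.ofSet (whiskerSet A α s) (h.isCompact_whiskerSet s) (h.isConnected_whiskerSet s)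
    (Or.inl h.mem)

theorem set_toCP (h : IsWhiskers q A α) (s : Fin n → ↥(Icc (0 : ℝ) 1)) :
    (h.toCP s).set = whiskerSet A α s := rfl

theorem ne' (h : IsWhiskers q A α) {i j : Fin n} (hij : i ≠ j) {s t : ℝ}
    (hs : s ∈ Ioc (0 : ℝ) 1) (ht : t ∈ Ioc (0 : ℝ) 1) : α i s ≠ α j t := by
  rcases hij.lt_or_gt with hij | hij
  · exact h.ne i j hij s hs t ht
  · exact (h.ne j i hij t ht s hs).symm

theorem le_of_whiskerSet_subset (h : IsWhiskers q A α) {s t : Fin n → ↥(Icc (0 : ℝ) 1)}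
    (hst : whiskerSet A α s ⊆ whiskerSet A α t) (i : Fin n) : s i ≤ t i := by
  by_contra! hlt
  have hlt : (t i : ℝ) < s i := hlt
  have hs : (s i : ℝ) ∈ Ioc (0 : ℝ) 1 := ⟨(t i).2.1.trans_lt hlt, (s i).2.2⟩
  have hmem : α i (s i) ∈ whiskerSet A α t :=
    hst (Or.inr (mem_iUnion.2 ⟨i, mem_image_of_mem _ (right_mem_Icc.2 (s i).2.1)⟩))
  rcases hmem with hA | hmem
  · exact h.notMem i _ hs hA
  · obtain ⟨j, u, hu, hju⟩ := mem_iUnion.1 hmem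
    have hu1 : u ≤ 1 := hu.2.trans (t j).2.2
    by_cases hij : j = i
    · subst hij
      have := h.inj j ⟨hu.1, hu1⟩ (s j).2 hju
      exact (hu.2.trans_lt hlt).ne this
    · rcases hu.1.eq_or_lt with rfl | hpos
      · exact h.notMem i _ hs (hju ▸ h.start j)
      · exact h.ne' hij ⟨hpos, hu1⟩ hs hju

theorem injective_toCP (h : IsWhiskers q A α) : Function.Injective h.toCP := by
  intro s t hst
  have heq : whiskerSet A α s = whiskerSet A α t := congrArg CP.set hst
  exact funext fun i =>
    le_antisymm (h.le_of_whiskerSet_subset heq.subset i) (h.le_of_whiskerSet_subset heq.superset i)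

theorem continuous_toCP (h : IsWhiskers q A α) : Continuous h.toCP := by
  have hunif : UniformContinuousOn (fun t i => α i t) (Icc (0 : ℝ) 1) :=
    isCompact_Icc.uniformContinuousOn_of_continuous (continuousOn_pi.2 h.cont)
  rw [Metric.continuous_iff]
  intro t ε hε
  obtain ⟨δ, hδ, hclose⟩ := Metric.uniformContinuousOn_iff.1 hunif (ε / 2) (by positivity)
  have key : ∀ s t : Fin n → ↥(Icc (0 : ℝ) 1), dist s t < δ → ∀ x ∈ whiskerSet A α s,
      ∃ y ∈ whiskerSet A α t, dist x y ≤ ε / 2 := by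
    intro s t hst x hx
    rcases hx with hx | hx
    · exact ⟨x, Or.inl hx, by rw [dist_self]; positivity⟩
    · obtain ⟨i, u, hu, rfl⟩ := mem_iUnion.1 hx
      have hu' : u ∈ Icc (0 : ℝ) 1 := ⟨hu.1, hu.2.trans (s i).2.2⟩
      have hv : min u (t i) ∈ Icc (0 : ℝ) (t i) := ⟨le_min hu.1 (t i).2.1, min_le_right _ _⟩
      refine ⟨α i (min u (t i)), Or.inr (mem_iUnion.2 ⟨i, mem_image_of_mem _ hv⟩), ?_⟩
      have hi : |(s i : ℝ) - t i| < δ := (dist_le_pi_dist s t i).trans_lt hst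
      have hd : dist u (min u (t i)) < δ := by
        rw [Real.dist_eq]
        rcases le_total u (t i) with h' | h'
        · simpa [min_eq_left h'] using hδ
        · rw [min_eq_right h', abs_of_nonneg (by linarith)]
          have := le_abs_self ((s i : ℝ) - t i)
          linarith [hu.2]
      exact ((dist_le_pi_dist _ _ i).trans_lt
        (hclose u hu' _ ⟨hv.1, hv.2.trans (t i).2.2⟩ hd)).le
  refine ⟨δ, hδ, fun s hst => ?_⟩
  rw [CP.dist_eq]
  refine (Metric.hausdorffDist_le_of_mem_dist (by positivity) (key s t hst) fun x hx => ?_).trans_lt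
    (half_lt_self hε)
  exact key t s (by rwa [dist_comm]) x hx

end IsWhiskers

theorem not_isWhiskers_three {q : Y} {A : Set Y} {α : Fin 3 → ℝ → Y}
    (e : (Fin 2 → ↥(Icc (0 : ℝ) 1)) ≃ₜ CP Y q) : ¬ IsWhiskers q A α := fun h =>
  not_injective_cube_square (fun s => e.symm (h.toCP s))
    (e.symm.continuous.comp h.continuous_toCP) (e.symm.injective.comp h.injective_toCP)

theorem not_isWhiskers_two {q : Y} {A : Set Y} {α : Fin 2 → ℝ → Y}
    (e : (Fin 1 → ↥(Icc (0 : ℝ) 1)) ≃ₜ CP Y q) : ¬ IsWhiskers q A α := by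
  intro h
  have hc := h.continuous_toCP
  refine not_injective_square_real (fun s => e.symm (h.toCP s) 0) (by fun_prop) ?_
  intro s t hst
  refine h.injective_toCP (e.symm.injective (funext fun i => ?_))
  rw [Subsingleton.elim i 0]
  exact Subtype.ext hst

namespace IsArcParam

variable {γ : ℝ → Y} {B : Set Y}

theorem isWhiskers_one (h : IsArcParam γ 0 1 B) : IsWhiskers (γ 0) {γ 0} ![γ] where
  isCompact := isCompact_singleton
  isConnected := isConnected_singleton
  mem := rfl
  cont := by simpa using h.cont
  inj := by simpa using h.inj
  start := by simp
  notMem := by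
    simp only [Fin.forall_fin_one, Matrix.cons_val_zero, mem_singleton_iff]
    intro t ht h0
    exact ht.1.ne' (h.inj (Ioc_subset_Icc_self ht) (left_mem_Icc.2 zero_le_one) h0)
  ne i j hij := by omega

theorem isWhiskers_two (h : IsArcParam γ (-1) 1 B) :
    IsWhiskers (γ 0) {γ 0} ![fun t => γ (-t), γ] where
  isCompact := isCompact_singleton
  isConnected := isConnected_singleton
  mem := rfl
  cont := by
    rw [Fin.forall_fin_two]
    refine ⟨h.cont.comp (f := fun t => -t) continuousOn_id.neg ?_, h.cont.mono ?_⟩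
    · intro t ht
      exact ⟨by linarith [ht.2], by linarith [ht.1]⟩
    · exact Icc_subset_Icc_left (by norm_num)
  inj := by
    rw [Fin.forall_fin_two]
    refine ⟨h.inj.comp neg_injective.injOn ?_, h.inj.mono ?_⟩
    · intro t ht
      constructor <;> linarith [ht.1, ht.2]
    · exact Icc_subset_Icc_left (by norm_num)
  start := by simp [Fin.forall_fin_two]
  notMem := by
    simp only [Fin.forall_fin_two, Matrix.cons_val_zero, Matrix.cons_val_one, mem_singleton_iff]
    have h0 : (0 : ℝ) ∈ Icc (-1 : ℝ) 1 := by norm_num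
    refine ⟨fun t ht hγ => ?_, fun t ht hγ => ?_⟩
    · have := h.inj (by constructor <;> linarith [ht.1, ht.2]) h0 hγ
      linarith [ht.1]
    · have := h.inj (by constructor <;> linarith [ht.1, ht.2]) h0 hγ
      linarith [ht.1]
  ne i j hij s hs t ht hst := by
    have hi : i = 0 := Fin.ext (by have := j.2; simp only [Fin.lt_def] at hij; simp; lia)
    have hj : j = 1 := Fin.ext (by have := j.2; simp only [Fin.lt_def] at hij; simp; lia)
    subst hi hj
    have hs' : -s ∈ Icc (-1 : ℝ) 1 := ⟨by linarith [hs.2], by linarith [hs.1]⟩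
    have ht' : t ∈ Icc (-1 : ℝ) 1 := ⟨by linarith [ht.1], ht.2⟩
    have := h.inj hs' ht' hst
    linarith [hs.1, ht.1]

theorem mem_range_toCP_one (h : IsArcParam γ 0 1 B) {K : CP Y (γ 0)} (hK : K.set ⊆ B) :
    K ∈ range h.isWhiskers_one.toCP := by
  obtain ⟨a, b, ha, hab, hb, hKab⟩ :=
    h.exists_eq_image_Icc K.1.isCompact K.2.1 hK
  obtain ⟨t, ht, ht0⟩ : γ 0 ∈ γ '' Icc a b := hKab ▸ K.2.2
  obtain rfl : t = 0 :=
    h.inj ⟨ha.trans ht.1, ht.2.trans hb⟩ (left_mem_Icc.2 zero_le_one) ht0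
  obtain rfl : a = 0 := le_antisymm ht.1 ha
  refine ⟨fun _ => ⟨b, hab, hb⟩, CP.set_injective_s8 ?_⟩
  rw [IsWhiskers.set_toCP, whiskerSet, show K.set = γ '' Icc 0 b from hKab]
  have hunion : (⋃ i : Fin 1, (![γ] : Fin 1 → ℝ → Y) i '' Icc 0 b) = γ '' Icc 0 b := by
    ext x
    simp only [mem_iUnion, Fin.exists_fin_one]
    rfl
  rw [hunion, union_eq_right, singleton_subset_iff]
  exact ⟨0, ⟨le_rfl, hab⟩, rfl⟩

theorem mem_range_toCP_two (h : IsArcParam γ (-1) 1 B) {K : CP Y (γ 0)} (hK : K.set ⊆ B) :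
    K ∈ range h.isWhiskers_two.toCP := by
  obtain ⟨a, b, ha, hab, hb, hKab⟩ :=
    h.exists_eq_image_Icc K.1.isCompact K.2.1 hK
  obtain ⟨t, ht, ht0⟩ : γ 0 ∈ γ '' Icc a b := hKab ▸ K.2.2
  obtain rfl : t = 0 :=
    h.inj ⟨ha.trans ht.1, ht.2.trans hb⟩ (by norm_num) ht0
  refine ⟨![⟨-a, by linarith [ht.1], by linarith⟩, ⟨b, ht.2, hb⟩], CP.set_injective_s8 ?_⟩
  rw [IsWhiskers.set_toCP, whiskerSet, show K.set = γ '' Icc a b from hKab,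
    ← Icc_union_Icc_eq_Icc ht.1 ht.2, image_union]
  have hneg : (fun t => γ (-t)) '' Icc 0 (-a) = γ '' Icc a 0 := by
    rw [← image_image γ Neg.neg, image_neg_Icc, neg_neg, neg_zero]
  have hunion : (⋃ i : Fin 2, (![fun t => γ (-t), γ] : Fin 2 → ℝ → Y) i ''
      Icc 0 ((![⟨-a, by linarith [ht.1], by linarith⟩, ⟨b, ht.2, hb⟩] :
        Fin 2 → ↥(Icc (0 : ℝ) 1)) i)) = γ '' Icc a 0 ∪ γ '' Icc 0 b := by
    rw [← hneg]
    ext x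
    simp only [mem_iUnion, Fin.exists_fin_two]
    rfl
  rw [hunion, union_eq_right, singleton_subset_iff]
  exact Or.inr ⟨0, ⟨le_rfl, ht.2⟩, rfl⟩

/-- If `q` is an end point of `Y`, which is an arc, then `C(q,Y)` is an arc. -/
theorem nonempty_homeomorph_one (h : IsArcParam γ 0 1 (univ : Set Y)) :
    Nonempty ((Fin 1 → ↥(Icc (0 : ℝ) 1)) ≃ₜ CP Y (γ 0)) :=
  ⟨Continuous.homeoOfEquivCompactToT2
    (f := Equiv.ofBijective _ ⟨h.isWhiskers_one.injective_toCP,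
      fun _ => h.mem_range_toCP_one (subset_univ _)⟩) h.isWhiskers_one.continuous_toCP⟩

/-- If `q` is an interior point of `Y`, which is an arc, then `C(q,Y)` is a 2-cell. -/
theorem nonempty_homeomorph_two (h : IsArcParam γ (-1) 1 (univ : Set Y)) :
    Nonempty ((Fin 2 → ↥(Icc (0 : ℝ) 1)) ≃ₜ CP Y (γ 0)) :=
  ⟨Continuous.homeoOfEquivCompactToT2
    (f := Equiv.ofBijective _ ⟨h.isWhiskers_two.injective_toCP,
      fun _ => h.mem_range_toCP_two (subset_univ _)⟩) h.isWhiskers_two.continuous_toCP⟩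

/-- If an end point of the arc `B` is interior to `B` in `Y`, then the corresponding hyperspace
is not a 2-cell. -/
theorem isEmpty_homeomorph_two (h : IsArcParam γ 0 1 B) {U : Set Y} (hU : IsOpen U)
    (h0 : γ 0 ∈ U) (hUB : U ⊆ B) : IsEmpty ((Fin 2 → ↥(Icc (0 : ℝ) 1)) ≃ₜ CP Y (γ 0)) := by
  refine ⟨fun e => ?_⟩
  set F := h.isWhiskers_one.toCP with hF
  have hFe : IsClosedEmbedding F :=
    h.isWhiskers_one.continuous_toCP.isClosedEmbedding h.isWhiskers_one.injective_toCP
  let W : Set (Fin 2 → ↥(Icc (0 : ℝ) 1)) := e ⁻¹' {K | K.set ⊆ U}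
  let r : (Fin 2 → ↥(Icc (0 : ℝ) 1)) → Fin 1 → ↥(Icc (0 : ℝ) 1) :=
    fun s => Function.invFun F (e s)
  have hr : ∀ s ∈ W, F (r s) = e s := fun s hs =>
    Function.invFun_eq (h.mem_range_toCP_one (hs.trans hUB))
  have hrc : ContinuousOn r W :=
    hFe.isInducing.continuousOn_iff.2 (e.continuous.continuousOn.congr hr)
  refine not_injOn_open_square (W := W) ((CP.isOpen_subset hU).preimage e.continuous) ?_
    (fun s => r s 0) ?_ ?_
  · refine ⟨e.symm (CP.ofSet {γ 0} isCompact_singleton isConnected_singleton rfl), ?_⟩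
    change (e (e.symm _)).set ⊆ U
    rw [e.apply_symm_apply]
    exact singleton_subset_iff.2 h0
  · exact continuous_subtype_val.comp_continuousOn ((continuous_apply 0).comp_continuousOn hrc)
  · intro s hs t ht hst
    have : r s = r t := funext fun i => by
      rw [Subsingleton.elim i 0]
      exact Subtype.ext hst
    exact e.injective (by rw [← hr s hs, ← hr t ht, this])

end IsArcParam

end Whiskers

section Trees

variable {Y : Type u} [MetricSpace Y]

theorem IsArcSet.isCompact_s8 {B : Set Y} (h : IsArcSet B) : IsCompact B := by
  obtain ⟨γ, hγ⟩ := h.exists_isArcParam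
  rw [← hγ.image]
  exact isCompact_Icc.image_of_continuousOn hγ.cont

theorem IsArcParam.exists_isSimpleClosedCurve_of_mem {γ η : ℝ → Y} {B E : Set Y}
    (h : IsArcParam γ 0 1 B) (h' : IsArcParam η 0 1 E) (h0 : η 0 ∈ B) (h1 : η 1 ∈ B)
    (hEB : E ∩ B ⊆ {η 0, η 1}) : ∃ S : Set Y, IsSimpleClosedCurve S := by
  obtain ⟨s, hs, hs0⟩ := h.exists_eq h0
  obtain ⟨t, ht, ht1⟩ := h.exists_eq h1
  have hne : s ≠ t := by
    rintro rfl
    exact zero_ne_one (h'.inj (left_mem_Icc.2 zero_le_one) (right_mem_Icc.2 zero_le_one)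
      (hs0.symm.trans ht1))
  rcases hne.lt_or_gt with hlt | hlt
  · have hη := h'.reverse.affine (k := 1) (m := -1 - t) (c' := t) (d' := t + 1) one_pos
      (by ring) (by ring)
    refine (h.restrict hs.1 hlt ht.2).exists_isSimpleClosedCurve hη ?_ ?_ ?_
    · simp [ht1]
    · simp [hs0]
    · rintro x ⟨⟨u, hu, rfl⟩, hx⟩
      rw [hs0, ht1]
      exact hEB ⟨hx, h.mem ⟨hs.1.trans hu.1, hu.2.trans ht.2⟩⟩
  · have hη := h'.affine (k := 1) (m := -s) (c' := s) (d' := s + 1) one_pos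
      (by ring) (by ring)
    refine (h.restrict ht.1 hlt hs.2).exists_isSimpleClosedCurve hη ?_ ?_ ?_
    · simp [hs0]
    · simp [ht1]
    · rintro x ⟨⟨u, hu, rfl⟩, hx⟩
      rw [hs0, ht1, pair_comm]
      exact hEB ⟨hx, h.mem ⟨ht.1.trans hu.1, hu.2.trans hs.2⟩⟩

/-- Every point of a tree lies on an arc whose end points are not limits of points off the arc.
If the arc is not the whole tree, another arc is attached to it at an interior point. -/
theorem IsTree.exists_maximal_arc (hY : IsTree Y) (q : Y) :
    ∃ B Z : Set Y, IsArcSet B ∧ q ∈ B ∧ IsClosed Z ∧ B ∪ Z = univ ∧ Z ∩ B ⊆ arcInterior B ∧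
      (B = univ ∨ ∃ (E : Set Y) (η : ℝ → Y), IsArcParam η 0 1 E ∧ η 0 ∈ arcInterior B ∧
        E ∩ B ⊆ {η 0}) := by
  classical
  obtain ⟨⟨_, hconn, -, 𝒜, harc, hcov, hend⟩, hcurve⟩ := hY
  obtain ⟨A, hA, hqA⟩ : ∃ A ∈ (𝒜 : Set (Set Y)), q ∈ A := mem_sUnion.1 (hcov ▸ mem_univ q)
  obtain ⟨G, hG, hmax⟩ := Finset.exists_max_image
    (𝒜.powerset.filter fun G : Finset (Set Y) =>
      IsArcSet (⋃₀ (G : Set (Set Y))) ∧ q ∈ ⋃₀ (G : Set (Set Y)))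
    Finset.card ⟨{A}, by simpa using ⟨hA, harc A hA, hqA⟩⟩
  simp only [Finset.mem_filter, Finset.mem_powerset] at hG hmax
  obtain ⟨hG𝒜, hGarc, hqG⟩ := hG
  set B : Set Y := ⋃₀ (G : Set (Set Y)) with hB
  obtain ⟨γ, hγ⟩ := hGarc.exists_isArcParam
  have hpt : ∀ E ∈ 𝒜, E ∉ G → ∀ x ∈ E ∩ B, IsArcEndpoint E x := by
    rintro E hE hEG x ⟨hxE, C, hC, hxC⟩
    exact (hend E hE C (hG𝒜 hC) (fun h => hEG (h ▸ hC)) x ⟨hxE, hxC⟩).1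
  have hattach : ∀ E ∈ 𝒜, E ∉ G → ∀ x ∈ E ∩ B,
      ∃ η : ℝ → Y, IsArcParam η 0 1 E ∧ η 0 = x ∧ x ∈ arcInterior B ∧ E ∩ B ⊆ {x} := by
    intro E hE hEG x hx
    obtain ⟨η, hη, rfl⟩ := (hpt E hE hEG x hx).exists_isArcParam
    have hsub : E ∩ B ⊆ {η 0, η 1} := fun y hy =>
      hη.eq_or_eq_of_isArcEndpoint (hpt E hE hEG y hy)
    have hsingle : E ∩ B ⊆ {η 0} := by
      intro y hy
      rcases hsub hy with h | h
      · exact h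
      · have h : y = η 1 := h
        obtain ⟨S, hS⟩ := hγ.exists_isSimpleClosedCurve_of_mem hη hx.2 (h ▸ hy.2) hsub
        exact (hcurve S hS).elim
    refine ⟨η, hη, rfl, ⟨hx.2, fun hxB => ?_⟩, hsingle⟩
    obtain ⟨δ, hδ, hδ0⟩ := hxB.exists_isArcParam
    have hδr := hδ.reverse
    rw [neg_zero] at hδr
    have harcE : IsArcSet (B ∪ E) :=
      hδr.isArcSet_union hη (by simpa using hδ0) (by simpa [hδ0, inter_comm] using hsingle)
    have hcard := hmax (insert E G) ⟨Finset.insert_subset hE hG𝒜, by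
      rw [Finset.coe_insert, sUnion_insert, union_comm]
      exact ⟨harcE, Or.inl hqG⟩⟩
    rw [Finset.card_insert_of_notMem hEG] at hcard
    lia
  have hZ : IsClosed (⋃₀ ((𝒜 \ G : Finset (Set Y)) : Set (Set Y))) := by
    rw [sUnion_eq_biUnion]
    exact (Finset.finite_toSet _).isClosed_biUnion fun E hE =>
      (harc E (Finset.mem_sdiff.1 hE).1).isCompact_s8.isClosed
  have hBZ : B ∪ ⋃₀ ((𝒜 \ G : Finset (Set Y)) : Set (Set Y)) = univ := by
    rw [hB, ← sUnion_union, ← Finset.coe_union, Finset.union_sdiff_of_subset hG𝒜, hcov]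
  refine ⟨B, _, hGarc, hqG, hZ, hBZ, ?_, ?_⟩
  · rintro x ⟨⟨E, hE, hxE⟩, hxB⟩
    obtain ⟨hE, hEG⟩ := Finset.mem_sdiff.1 hE
    obtain ⟨-, -, -, hx, -⟩ := hattach E hE hEG x ⟨hxE, hxB⟩
    exact hx
  · refine or_iff_not_imp_left.2 fun hne => ?_
    obtain ⟨y, hy⟩ := (ne_univ_iff_exists_notMem B).1 hne
    obtain ⟨x, -, hxB, E, hE, hxE⟩ := isPreconnected_closed_iff.1 isPreconnected_univ B _
      hGarc.isCompact_s8.isClosed hZ hBZ.superset ⟨q, mem_univ q, hqG⟩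
      ⟨y, mem_univ y, ((hBZ.superset (mem_univ y)).resolve_left hy)⟩
    obtain ⟨hE, hEG⟩ := Finset.mem_sdiff.1 hE
    obtain ⟨η, hη, rfl, hx, hEB⟩ := hattach E hE hEG x ⟨hxE, hxB⟩
    exact ⟨E, η, hη, hx, hEB⟩

namespace IsArcParam

variable {γ η : ℝ → Y} {m : ℝ} {B E : Set Y}

theorem notMem_of_attached (hη : IsArcParam η 0 1 E) (hEB : E ∩ B ⊆ {η 0}) {t : ℝ}
    (ht : t ∈ Ioc (0 : ℝ) 1) : η t ∉ B := fun h =>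
  ht.1.ne' (hη.inj (Ioc_subset_Icc_self ht) (left_mem_Icc.2 zero_le_one)
    (hEB ⟨hη.mem (Ioc_subset_Icc_self ht), h⟩))

/-- An arc attached at an interior point of the arc `B` and the piece of `B` beyond that point
are whiskers. -/
theorem isWhiskers_branch_one (h : IsArcParam γ 0 1 B) (hη : IsArcParam η 0 1 E)
    (hm : m ∈ Ioo (0 : ℝ) 1) (hγη : γ m = η 0) (hEB : E ∩ B ⊆ {η 0}) :
    IsWhiskers (γ 0) (γ '' Icc 0 m) ![fun u => γ ((1 - m) * u + m), η] := by
  have hpos : 0 < 1 - m := by linarith [hm.2]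
  have hsub : Icc 0 m ⊆ Icc (0 : ℝ) 1 := Icc_subset_Icc_right hm.2.le
  have hγ' := (h.restrict hm.1.le hm.2 le_rfl).affine (c' := 0) (d' := 1) hpos
    (by ring) (by ring)
  have hmem : ∀ u ∈ Ioc (0 : ℝ) 1, (1 - m) * u + m ∈ Ioc m 1 := fun u hu =>
    ⟨by nlinarith [hu.1], by nlinarith [hu.2]⟩
  have hIcc : Ioc m 1 ⊆ Icc (0 : ℝ) 1 := fun t ht => ⟨hm.1.le.trans ht.1.le, ht.2⟩
  have hAB : γ '' Icc 0 m ⊆ B := by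
    rw [← h.image]
    exact image_mono hsub
  refine ⟨isCompact_Icc.image_of_continuousOn (h.cont.mono hsub),
    (isConnected_Icc hm.1.le).image _ (h.cont.mono hsub), ⟨0, ⟨le_rfl, hm.1.le⟩, rfl⟩,
    Fin.forall_fin_two.2 ⟨hγ'.cont, hη.cont⟩, Fin.forall_fin_two.2 ⟨hγ'.inj, hη.inj⟩,
    Fin.forall_fin_two.2 ⟨⟨m, ⟨hm.1.le, le_rfl⟩, by simp⟩, ⟨m, ⟨hm.1.le, le_rfl⟩, hγη⟩⟩,
    Fin.forall_fin_two.2 ⟨?_, fun t ht hA => hη.notMem_of_attached hEB ht (hAB hA)⟩, ?_⟩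
  · rintro u hu ⟨t, ht, htu⟩
    have := h.inj (hsub ht) (hIcc (hmem u hu)) htu
    linarith [(hmem u hu).1, ht.2]
  · simp only [Fin.forall_fin_two]
    refine ⟨⟨by simp, fun _ s hs t ht hst => ?_⟩, by simp, by simp⟩
    exact hη.notMem_of_attached hEB ht (mem_of_eq_of_mem hst.symm (h.mem (hIcc (hmem s hs))))

/-- An arc attached at an interior point of the arc `B` and the two pieces of `B` beyond a
subarc containing that point are whiskers. -/
theorem isWhiskers_branch_two (h : IsArcParam γ (-1) 1 B) (hη : IsArcParam η 0 1 E)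
    (hm0 : 0 ≤ m) (hm1 : m < 1) (hγη : γ m = η 0) (hEB : E ∩ B ⊆ {η 0}) :
    IsWhiskers (γ 0) (γ '' Icc 0 m) ![fun u => γ ((1 - m) * u + m), fun u => γ (-u), η] := by
  have hpos : 0 < 1 - m := by linarith
  have hsub : Icc 0 m ⊆ Icc (-1 : ℝ) 1 := Icc_subset_Icc (by norm_num) hm1.le
  have hγ' := (h.restrict (by linarith) hm1 le_rfl).affine (c' := 0) (d' := 1) hpos
    (by ring) (by ring)
  have hγ'' := (h.restrict le_rfl neg_one_lt_zero zero_le_one).reverse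
  rw [neg_zero, neg_neg] at hγ''
  have hmem : ∀ u ∈ Ioc (0 : ℝ) 1, (1 - m) * u + m ∈ Ioc m 1 := fun u hu =>
    ⟨by nlinarith [hu.1], by nlinarith [hu.2]⟩
  have hIcc : Ioc m 1 ⊆ Icc (-1 : ℝ) 1 := fun t ht => ⟨by linarith [ht.1], ht.2⟩
  have hneg : ∀ u ∈ Ioc (0 : ℝ) 1, -u ∈ Icc (-1 : ℝ) 1 := fun u hu =>
    ⟨by linarith [hu.2], by linarith [hu.1]⟩
  have hAB : γ '' Icc 0 m ⊆ B := by
    rw [← h.image]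
    exact image_mono hsub
  have hforall : ∀ {P : Fin 3 → Prop}, (∀ i, P i) ↔ P 0 ∧ P 1 ∧ P 2 := by
    intro P
    rw [Fin.forall_fin_succ, Fin.forall_fin_two]
    rfl
  refine ⟨isCompact_Icc.image_of_continuousOn (h.cont.mono hsub),
    (isConnected_Icc hm0).image _ (h.cont.mono hsub), ⟨0, ⟨le_rfl, hm0⟩, rfl⟩,
    hforall.2 ⟨hγ'.cont, hγ''.cont, hη.cont⟩, hforall.2 ⟨hγ'.inj, hγ''.inj, hη.inj⟩,
    hforall.2 ⟨⟨m, ⟨hm0, le_rfl⟩, by simp⟩, ⟨0, ⟨le_rfl, hm0⟩, by simp⟩,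
      ⟨m, ⟨hm0, le_rfl⟩, hγη⟩⟩,
    hforall.2 ⟨?_, ?_, fun t ht hA => hη.notMem_of_attached hEB ht (hAB hA)⟩, ?_⟩
  · rintro u hu ⟨t, ht, htu⟩
    have := h.inj (hsub ht) (hIcc (hmem u hu)) htu
    linarith [(hmem u hu).1, ht.2]
  · rintro u hu ⟨t, ht, htu⟩
    have := h.inj (hsub ht) (hneg u hu) htu
    linarith [hu.1, ht.1]
  · simp only [hforall]
    refine ⟨⟨by simp, fun _ s hs t ht hst => ?_, fun _ s hs t ht hst => ?_⟩,
      ⟨by simp, by simp, fun _ s hs t ht hst => ?_⟩, by simp, by simp, by simp⟩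
    · have := h.inj (hIcc (hmem s hs)) (hneg t ht) hst
      linarith [(hmem s hs).1, ht.1]
    · exact hη.notMem_of_attached hEB ht (mem_of_eq_of_mem hst.symm (h.mem (hIcc (hmem s hs))))
    · exact hη.notMem_of_attached hEB ht (mem_of_eq_of_mem hst.symm (h.mem (hneg s hs)))

end IsArcParam

/-- Every point of an arc is either an end point or an interior point. -/
theorem IsArcSet.exists_isArcParam_of_mem {B : Set Y} (hB : IsArcSet B) {q : Y} (hq : q ∈ B) :
    (∃ γ : ℝ → Y, IsArcParam γ 0 1 B ∧ γ 0 = q) ∨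
      ∃ γ : ℝ → Y, IsArcParam γ (-1) 1 B ∧ γ 0 = q := by
  by_cases h : IsArcEndpoint B q
  · exact Or.inl h.exists_isArcParam
  · exact Or.inr (exists_isArcParam_of_mem_arcInterior hB ⟨hq, h⟩)

/-- If `C(q,Y)` is an arc, then the tree `Y` is an arc with end point `q`. -/
theorem IsTree.exists_isArcParam_of_homeomorph_one (hY : IsTree Y) {q : Y}
    (e : (Fin 1 → ↥(Icc (0 : ℝ) 1)) ≃ₜ CP Y q) :
    ∃ γ : ℝ → Y, IsArcParam γ 0 1 univ ∧ γ 0 = q := by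
  obtain ⟨B, Z, hB, hq, -, -, -, hor⟩ := hY.exists_maximal_arc q
  rcases hB.exists_isArcParam_of_mem hq with ⟨γ, hγ, rfl⟩ | ⟨γ, hγ, rfl⟩
  · rcases hor with rfl | ⟨E, η, hη, h0, hEB⟩
    · exact ⟨γ, hγ, rfl⟩
    · rw [hγ.arcInterior_eq] at h0
      obtain ⟨m, hm, hγη⟩ := h0
      exact (not_isWhiskers_two e (hγ.isWhiskers_branch_one hη hm hγη hEB)).elim
  · exact (not_isWhiskers_two e hγ.isWhiskers_two).elim

/-- If `C(q,Y)` is a 2-cell, then the tree `Y` is an arc with interior point `q`. -/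
theorem IsTree.exists_isArcParam_of_homeomorph_two (hY : IsTree Y) {q : Y}
    (e : (Fin 2 → ↥(Icc (0 : ℝ) 1)) ≃ₜ CP Y q) :
    ∃ γ : ℝ → Y, IsArcParam γ (-1) 1 univ ∧ γ 0 = q := by
  obtain ⟨B, Z, hB, hq, hZ, hBZ, hZint, hor⟩ := hY.exists_maximal_arc q
  rcases hB.exists_isArcParam_of_mem hq with ⟨γ, hγ, rfl⟩ | ⟨γ, hγ, rfl⟩
  · have hZB : Zᶜ ⊆ B := compl_subset_iff_union.2 (by rw [union_comm, hBZ])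
    refine ((hγ.isEmpty_homeomorph_two hZ.isOpen_compl (fun h0 => ?_) hZB).false e).elim
    exact (hZint ⟨h0, hq⟩).2 hγ.isArcEndpoint_left
  · rcases hor with rfl | ⟨E, η, hη, h0, hEB⟩
    · exact ⟨γ, hγ, rfl⟩
    · rw [hγ.arcInterior_eq] at h0
      obtain ⟨m, hm, hγη⟩ := h0
      rcases le_total 0 m with hm0 | hm0
      · exact (not_isWhiskers_three e (hγ.isWhiskers_branch_two hη hm0 hm.2 hγη hEB)).elim
      · have hγ' := hγ.reverse
        rw [neg_neg] at hγ'
        have := hγ'.isWhiskers_branch_two (m := -m) hη (by linarith) (by linarith [hm.1])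
          (by simpa using hγη) hEB
        simp only [neg_zero] at this
        exact (not_isWhiskers_three e this).elim

end Trees

theorem statement8 {X : Type u} [MetricSpace X] (hX : IsTree X) (hXarc : IsArcSpace X)
    (p : X) : UniqueHyperspaceInTrees X p := by
  intro Y _ hY q ⟨e⟩
  have harc : IsArcSet (univ : Set X) := hXarc.map (Homeomorph.Set.univ X).trans
  rcases harc.exists_isArcParam_of_mem (mem_univ p) with ⟨δ, hδ, rfl⟩ | ⟨δ, hδ, rfl⟩
  · obtain ⟨f⟩ := hδ.nonempty_homeomorph_one
    obtain ⟨γ, hγ, rfl⟩ := hY.exists_isArcParam_of_homeomorph_one (f.trans e)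
    exact hδ.exists_homeomorph_of_univ hγ (left_mem_Icc.2 zero_le_one)
  · obtain ⟨f⟩ := hδ.nonempty_homeomorph_two
    obtain ⟨γ, hγ, rfl⟩ := hY.exists_isArcParam_of_homeomorph_two (f.trans e)
    exact hδ.exists_homeomorph_of_univ hγ (by norm_num)
end
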